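/- arXiv:math/9803126 — 10 statements merged into one kernel-verified Lean document; each statement's English description precedes it below -/
import Mathlib

section
/- Let n, k be natural numbers with k ≥ 2 and let v : Fin k → ℤ^n be a family of lattice vectors such that (i) the family (v i), viewed in ℚ^n, is ℚ-linearly dependent, (ii) for every index i the subfamily (v α)_{α ≠ i} is ℚ-linearly independent, and (iii) for every index i the subfamily (v α)_{α ≠ i} is unimodular. Then every nonzero r : Fin k → ℚ with ∑ i, r i • v i = 0 satisfies |r i| = |r j| for all i, j. Moreover, if w : Fin k → ℚ is such that the lifted family of vectors (v i, w i) ∈ ℚ^n × ℚ is ℚ-linearly independent, then there exists ε : Fin k → ℚ with ε i ∈ {1, −1} for every i, ∑ i, ε i • v i = 0 and ∑ i, (ε i) * (w i) > 0, and every r : Fin k → ℚ with ∑ i, r i • v i = 0 is a scalar multiple of ε. -/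
/-- The coercion of an integer lattice vector to a rational vector. -/
def castQ {n : ℕ} (x : Fin n → ℤ) : Fin n → ℚ := fun j => (x j : ℚ)

/-- A family of lattice vectors is unimodular if it is `ℚ`-linearly independent and the
subgroup of `ℤ^n` it generates equals the set of all lattice points lying in its
`ℚ`-linear span. -/
def IsUnimodular {n : ℕ} {ι : Type*} (v : ι → Fin n → ℤ) : Prop :=
  LinearIndependent ℚ (fun i => castQ (v i)) ∧
  ∀ z : Fin n → ℤ,
    z ∈ Submodule.span ℤ (Set.range v) ↔
      castQ z ∈ Submodule.span ℚ (Set.range fun i => castQ (v i))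

/-!
Deleting one vector of a circuit leaves a `ℚ`-basis of its span, so a linear relation is determined
by any one of its coefficients. If that basis is moreover unimodular, the deleted vector is an
integral combination of it, so every coefficient is an integral multiple of that of the deleted
vector. As every vector may be deleted, all coefficients generate the same subgroup of `ℚ` and
hence agree up to sign. Finally, independence of the lifted family prevents the height of a nonzero
relation from vanishing, so the sign of the relation can be chosen to make it positive.
-/

section LinearRelation

variable {R K V ι : Type*} [Ring R] [DivisionRing K] [AddCommGroup V] [Module R V] [Module K V]
  [Fintype ι] {u : ι → V} {i : ι}

theorem eq_zero_of_sum_smul_eq_zero_of_apply_eq_zero {r : ι → R}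
    (hu : LinearIndependent R fun α : {α // α ≠ i} => u α)
    (hr : ∑ j, r j • u j = 0) (hi : r i = 0) : r = 0 := by
  classical
  rw [Fintype.sum_eq_add_sum_subtype_ne _ i, hi, zero_smul, zero_add] at hr
  funext j
  by_cases hj : j = i
  · rw [hj, hi, Pi.zero_apply]
  · exact Fintype.linearIndependent_iff.1 hu (fun α => r α) hr ⟨j, hj⟩

theorem sum_smul_smul_eq_zero {r : ι → R} (c : R) (hr : ∑ j, r j • u j = 0) :
    ∑ j, (c • r) j • u j = 0 := by
  simp only [Pi.smul_apply, smul_assoc, ← Finset.smul_sum, hr, smul_zero]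

theorem eq_div_smul_of_sum_smul_eq_zero {r s : ι → K}
    (hu : LinearIndependent K fun α : {α // α ≠ i} => u α)
    (hr : ∑ j, r j • u j = 0) (hs : ∑ j, s j • u j = 0) (hi : s i ≠ 0) :
    r = (r i / s i) • s := by
  refine sub_eq_zero.1 (eq_zero_of_sum_smul_eq_zero_of_apply_eq_zero hu ?_ ?_)
  · simp only [Pi.sub_apply, sub_smul, Finset.sum_sub_distrib, hr, sum_smul_smul_eq_zero _ hs,
      sub_zero]
  · simp only [Pi.sub_apply, Pi.smul_apply, smul_eq_mul, div_mul_cancel₀ _ hi, sub_self]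

theorem sum_subtype_ne_smul_eq_of_sum_smul_eq_zero [DecidableEq ι] {r : ι → K}
    (hr : ∑ j, r j • u j = 0) (hi : r i ≠ 0) :
    ∑ α : {α // α ≠ i}, (-(r i)⁻¹ * r α) • u α = u i := by
  rw [Fintype.sum_eq_add_sum_subtype_ne _ i] at hr
  simp only [mul_smul, ← Finset.smul_sum, eq_neg_of_add_eq_zero_right hr]
  rw [smul_neg, neg_smul, neg_neg, inv_smul_smul₀ hi]

end LinearRelation

theorem abs_eq_abs_of_zmultiples_eq {G : Type*} [AddCommGroup G] [LinearOrder G]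
    [IsOrderedAddMonoid G] {a b : G}
    (h : AddSubgroup.zmultiples a = AddSubgroup.zmultiples b) : |a| = |b| := by
  by_cases ha : a = 0
  · rw [ha, AddSubgroup.zmultiples_zero_eq_bot, eq_comm, AddSubgroup.zmultiples_eq_bot] at h
    rw [ha, h]
  · rcases (AddSubgroup.zmultiples_eq_zmultiples_iff
      (not_isOfFinAddOrder_of_isAddTorsionFree ha)).1 h with rfl | rfl
    · rfl
    · exact (abs_neg a).symm

theorem exists_pos_smul_eq_one_or_neg_one {K ι : Type*} [Field K] [LinearOrder K]
    [IsStrictOrderedRing K] {r : ι → K} (hr : r ≠ 0)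
    (habs : ∀ i j, |r i| = |r j|) :
    ∃ c : K, 0 < c ∧ ∀ i, (c • r) i = 1 ∨ (c • r) i = -1 := by
  obtain ⟨i, hi⟩ := Function.ne_iff.1 hr
  have hpos : 0 < |r i| := abs_pos.2 hi
  refine ⟨|r i|⁻¹, inv_pos.2 hpos, fun j => eq_or_eq_neg_of_abs_eq ?_⟩
  rw [Pi.smul_apply, smul_eq_mul, abs_mul, abs_inv, abs_abs, habs j i, inv_mul_cancel₀ hpos.ne']

theorem exists_sum_smul_eq_zero_and_sum_mul_pos {R V ι : Type*} [Ring R] [LinearOrder R]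
    [IsOrderedAddMonoid R] [AddCommGroup V] [Module R V] [Fintype ι] {u : ι → V} {w : ι → R}
    (hdep : ¬ LinearIndependent R u) (hlift : LinearIndependent R fun i => (u i, w i)) :
    ∃ r : ι → R, ∑ i, r i • u i = 0 ∧ 0 < ∑ i, r i * w i := by
  obtain ⟨r, hr, i, hi⟩ := Fintype.not_linearIndependent_iff.1 hdep
  have hheight : ∑ j, r j * w j ≠ 0 := fun h =>
    hi (Fintype.linearIndependent_iff.1 hlift r
      (Prod.ext (by simpa [Prod.fst_sum] using hr) (by simpa [Prod.snd_sum] using h)) i)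
  rcases hheight.lt_or_gt with hneg | hpos
  · refine ⟨-r, ?_, ?_⟩
    · simpa using hr
    · simpa using hneg
  · exact ⟨r, hr, hpos⟩

section Unimodular

variable {n : ℕ} {ι : Type*} [Fintype ι] {v : ι → Fin n → ℤ}

theorem castQ_sum_smul (m : ι → ℤ) (v : ι → Fin n → ℤ) :
    castQ (∑ i, m i • v i) = ∑ i, (m i : ℚ) • castQ (v i) := by
  funext j
  simp [castQ, Finset.sum_apply]

theorem IsUnimodular.exists_intCast_eq (hv : IsUnimodular v) {z : Fin n → ℤ} {c : ι → ℚ}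
    (hc : ∑ i, c i • castQ (v i) = castQ z) : ∃ m : ι → ℤ, ∀ i, (m i : ℚ) = c i := by
  have hspan : z ∈ Submodule.span ℤ (Set.range v) :=
    (hv.2 z).2 ((Submodule.mem_span_range_iff_exists_fun ℚ).2 ⟨c, hc⟩)
  obtain ⟨m, hm⟩ := (Submodule.mem_span_range_iff_exists_fun ℤ).1 hspan
  have hcomb : ∑ i, (m i : ℚ) • castQ (v i) = ∑ i, c i • castQ (v i) := by
    rw [← castQ_sum_smul, hm, hc]
  exact ⟨m, congrFun (hv.1.fintypeLinearCombination_injective hcomb)⟩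

theorem IsUnimodular.mem_zmultiples_of_sum_smul_eq_zero {i : ι}
    (hv : IsUnimodular fun α : {α // α ≠ i} => v α) {r : ι → ℚ}
    (hr : ∑ j, r j • castQ (v j) = 0) (j : ι) : r j ∈ AddSubgroup.zmultiples (r i) := by
  classical
  by_cases hi : r i = 0
  · rw [eq_zero_of_sum_smul_eq_zero_of_apply_eq_zero hv.1 hr hi]
    exact zero_mem _
  by_cases hj : j = i
  · exact hj ▸ AddSubgroup.mem_zmultiples (r j)
  obtain ⟨m, hm⟩ := hv.exists_intCast_eq (sum_subtype_ne_smul_eq_of_sum_smul_eq_zero hr hi)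
  refine AddSubgroup.mem_zmultiples_iff.2 ⟨-m ⟨j, hj⟩, ?_⟩
  rw [zsmul_eq_mul, Int.cast_neg, hm]
  field_simp

theorem abs_eq_abs_of_sum_smul_eq_zero_of_isUnimodular
    (hv : ∀ i : ι, IsUnimodular fun α : {α // α ≠ i} => v α) {r : ι → ℚ}
    (hr : ∑ j, r j • castQ (v j) = 0) (i j : ι) : |r i| = |r j| :=
  abs_eq_abs_of_zmultiples_eq <| le_antisymm
    (AddSubgroup.zmultiples_le.2 ((hv j).mem_zmultiples_of_sum_smul_eq_zero hr i))
    (AddSubgroup.zmultiples_le.2 ((hv i).mem_zmultiples_of_sum_smul_eq_zero hr j))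

end Unimodular

theorem stmt0 {n k : ℕ} (hk : 2 ≤ k) (v : Fin k → Fin n → ℤ)
    (hdep : ¬ LinearIndependent ℚ (fun i => castQ (v i)))
    (hindep : ∀ i : Fin k,
      LinearIndependent ℚ (fun α : {α : Fin k // α ≠ i} => castQ (v α)))
    (huni : ∀ i : Fin k, IsUnimodular (fun α : {α : Fin k // α ≠ i} => v (α : Fin k))) :
    (∀ r : Fin k → ℚ, r ≠ 0 → ∑ i, r i • castQ (v i) = 0 →
      ∀ i j, |r i| = |r j|) ∧
    (∀ w : Fin k → ℚ,
      LinearIndependent ℚ (fun i => ((castQ (v i), w i) : (Fin n → ℚ) × ℚ)) →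
      ∃ ε : Fin k → ℚ, (∀ i, ε i = 1 ∨ ε i = -1) ∧
        (∑ i, ε i • castQ (v i)) = 0 ∧ 0 < ∑ i, ε i * w i ∧
        ∀ r : Fin k → ℚ, (∑ i, r i • castQ (v i)) = 0 → ∃ c : ℚ, r = c • ε) := by
  refine ⟨fun r _ hr => abs_eq_abs_of_sum_smul_eq_zero_of_isUnimodular huni hr, fun w hw => ?_⟩
  obtain ⟨r, hr, hheight⟩ := exists_sum_smul_eq_zero_and_sum_mul_pos hdep hw
  have hr0 : r ≠ 0 := by
    rintro rfl
    simp at hheight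
  obtain ⟨c, hc, hsign⟩ := exists_pos_smul_eq_one_or_neg_one hr0
    (abs_eq_abs_of_sum_smul_eq_zero_of_isUnimodular huni hr)
  obtain ⟨i, hi⟩ := Function.ne_iff.1 hr0
  have hcr : ∑ j, (c • r) j • castQ (v j) = 0 := sum_smul_smul_eq_zero c hr
  refine ⟨c • r, hsign, hcr, ?_, fun q hq =>
    ⟨_, eq_div_smul_of_sum_smul_eq_zero (hindep i) hq hcr (mul_ne_zero hc.ne' hi)⟩⟩
  simpa only [Pi.smul_apply, smul_eq_mul, mul_assoc, ← Finset.mul_sum] using mul_pos hc hheight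
end

section
/- Let n, k be natural numbers, let ρ i = (v i, w i) ∈ ℚ^n × ℚ for i ∈ Fin k be a ℚ-linearly independent family, and let r : Fin k → ℚ satisfy r i ≠ 0 for all i, ∑ i, r i • v i = 0 and ∑ i, (r i) * (w i) > 0. Let σ = cone({ρ i : i ∈ Fin k}). Fix an index j and let p = ∑_{α ≠ j} (c α) • (ρ α) where c α > 0 for all α ≠ j. Then: (a) if r j > 0, there exists ε₀ > 0 such that p + (0, ε) ∈ σ for all ε with 0 < ε ≤ ε₀, and p − (0, ε) ∉ σ for all ε > 0; (b) if r j < 0, there exists ε₀ > 0 such that p − (0, ε) ∈ σ for all ε with 0 < ε ≤ ε₀, and p + (0, ε) ∉ σ for all ε > 0. -/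
/-- The cone (set of all nonnegative rational linear combinations) generated by a set `S`
of vectors in a `ℚ`-vector space. -/
def qCone {V : Type*} [AddCommMonoid V] [Module ℚ V] (S : Set V) : Set V :=
  {x | ∃ (t : Finset V) (c : V → ℚ), ↑t ⊆ S ∧ (∀ y ∈ t, 0 ≤ c y) ∧ x = ∑ y ∈ t, c y • y}

open Filter Topology

/-! Since `∑ i, r i • ρ i = (0, ∑ i, r i * w i)` is a positive multiple of the vertical direction,
moving vertically from a point of the relative interior of the facet opposite to `ρ j` changes the
`j`-th conical coordinate, which vanishes on that facet, with the sign of `r j`. The remaining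
coordinates are positive and stay so for small displacements, while by linear independence a
negative `j`-th coordinate excludes membership in the cone. -/

section Cone

theorem qCone_eq_hull {V : Type*} [AddCommGroup V] [Module ℚ V] (S : Set V) :
    qCone S = PointedCone.hull ℚ S := by
  ext x
  constructor
  · rintro ⟨t, c, htS, hc, rfl⟩
    exact Submodule.sum_mem _ fun y hy =>
      PointedCone.smul_mem _ (hc y hy) (PointedCone.subset_hull (htS hy))
  · intro hx
    obtain ⟨c, hcS, hc, rfl⟩ := PointedCone.mem_hull_set.1 hx
    exact ⟨c.support, c, hcS, fun y _ => hc y, rfl⟩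

variable {ι V : Type*} [Fintype ι] [AddCommGroup V] [Module ℚ V] {ρ : ι → V}

theorem mem_qCone_range_iff {x : V} :
    x ∈ qCone (Set.range ρ) ↔ ∃ a : ι → ℚ, (∀ i, 0 ≤ a i) ∧ ∑ i, a i • ρ i = x := by
  rw [qCone_eq_hull, SetLike.mem_coe, Submodule.mem_span_range_iff_exists_fun]
  constructor
  · rintro ⟨a, rfl⟩
    exact ⟨fun i => a i, fun i => (a i).2, rfl⟩
  · rintro ⟨a, ha, rfl⟩
    exact ⟨fun i => ⟨a i, ha i⟩, rfl⟩

theorem sum_smul_mem_qCone_range_iff (hρ : LinearIndependent ℚ ρ) {b : ι → ℚ} :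
    ∑ i, b i • ρ i ∈ qCone (Set.range ρ) ↔ ∀ i, 0 ≤ b i := by
  rw [mem_qCone_range_iff]
  constructor
  · rintro ⟨a, ha, hab⟩ i
    exact Fintype.linearIndependent_iffₛ.1 hρ a b hab i ▸ ha i
  · exact fun hb => ⟨b, hb, rfl⟩

end Cone

theorem exists_pos_forall_nonneg_add_mul {ι K : Type*} [Finite ι] [Field K] [LinearOrder K]
    [IsStrictOrderedRing K] [TopologicalSpace K] [OrderTopology K] {b s : ι → K}
    (hb : ∀ i, 0 ≤ b i) (hs : ∀ i, b i = 0 → 0 ≤ s i) :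
    ∃ ε₀ : K, 0 < ε₀ ∧ ∀ ε, 0 < ε → ε ≤ ε₀ → ∀ i, 0 ≤ b i + ε * s i := by
  have eventually_nonneg : ∀ᶠ ε in 𝓝[>] (0 : K), ∀ i, 0 ≤ b i + ε * s i := by
    refine eventually_all.2 fun i => ?_
    rcases (hb i).eq_or_lt' with hbi | hbi
    · filter_upwards [self_mem_nhdsWithin] with ε hε
      rw [hbi, zero_add]
      exact mul_nonneg (le_of_lt hε) (hs i hbi)
    · have tendsto_coord : Tendsto (fun ε => b i + ε * s i) (𝓝[>] 0) (𝓝 (b i)) := by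
        refine Tendsto.mono_left ?_ nhdsWithin_le_nhds
        exact Continuous.tendsto' (by fun_prop) _ _ (by simp)
      exact (tendsto_coord.eventually_const_lt hbi).mono fun _ => le_of_lt
  obtain ⟨ε₀, hε₀, hsub⟩ := mem_nhdsGT_iff_exists_Ioc_subset.1 eventually_nonneg
  exact ⟨ε₀, hε₀, fun ε hε hle => hsub ⟨hε, hle⟩⟩

theorem sum_erase_add_smul_sum {ι R M : Type*} [Fintype ι] [DecidableEq ι] [Semiring R]
    [AddCommMonoid M] [Module R M] (ρ : ι → M) (j : ι) (c s : ι → R) (ε : R) :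
    ∑ i ∈ Finset.univ.erase j, c i • ρ i + ε • ∑ i, s i • ρ i =
      ∑ i, (Function.update c j 0 i + ε * s i) • ρ i := by
  have sum_erase : ∑ i ∈ Finset.univ.erase j, c i • ρ i = ∑ i, Function.update c j 0 i • ρ i := by
    rw [← Finset.sum_erase (a := j) (f := fun i => Function.update c j 0 i • ρ i) _ (by simp)]
    refine Finset.sum_congr rfl fun i hi => ?_
    rw [Function.update_of_ne (Finset.ne_of_mem_erase hi)]
  simp only [sum_erase, add_smul, Finset.sum_add_distrib, mul_smul, Finset.smul_sum]

section Facet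

variable {ι V : Type*} [Fintype ι] [DecidableEq ι] [AddCommGroup V] [Module ℚ V]
  {ρ : ι → V} {j : ι} {c s : ι → ℚ}

theorem exists_pos_sum_erase_add_smul_sum_mem_qCone (hc : ∀ i, i ≠ j → 0 < c i) (hs : 0 ≤ s j) :
    ∃ ε₀ : ℚ, 0 < ε₀ ∧ ∀ ε : ℚ, 0 < ε → ε ≤ ε₀ →
      ∑ i ∈ Finset.univ.erase j, c i • ρ i + ε • ∑ i, s i • ρ i ∈ qCone (Set.range ρ) := by
  have coord_nonneg (i : ι) : 0 ≤ Function.update c j 0 i := by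
    rcases eq_or_ne i j with rfl | hij
    · simp
    · simpa [hij] using (hc i hij).le
  have direction_nonneg (i : ι) (hi : Function.update c j 0 i = 0) : 0 ≤ s i := by
    rcases eq_or_ne i j with rfl | hij
    · exact hs
    · exact absurd (by simpa [hij] using hi) (hc i hij).ne'
  obtain ⟨ε₀, hε₀, hnonneg⟩ := exists_pos_forall_nonneg_add_mul coord_nonneg direction_nonneg
  refine ⟨ε₀, hε₀, fun ε hε hle => ?_⟩
  rw [sum_erase_add_smul_sum]
  exact mem_qCone_range_iff.2 ⟨_, hnonneg ε hε hle, rfl⟩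

theorem sum_erase_add_smul_sum_notMem_qCone (hρ : LinearIndependent ℚ ρ) (hs : s j < 0) {ε : ℚ}
    (hε : 0 < ε) :
    ∑ i ∈ Finset.univ.erase j, c i • ρ i + ε • ∑ i, s i • ρ i ∉ qCone (Set.range ρ) := by
  rw [sum_erase_add_smul_sum, sum_smul_mem_qCone_range_iff hρ]
  intro hnonneg
  have coord_nonneg : 0 ≤ ε * s j := by simpa using hnonneg j
  exact coord_nonneg.not_gt (mul_neg_of_pos_of_neg hε hs)

end Facet

theorem vertical_eq_smul_sum {ι K E : Type*} [Fintype ι] [Field K] [AddCommMonoid E] [Module K E]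
    {v : ι → E} {w r : ι → K} (hrel : ∑ i, r i • v i = 0) (hw : ∑ i, r i * w i ≠ 0) (ε : K) :
    ((0 : E), ε) = ε • ∑ i, (r i / ∑ l, r l * w l) • (v i, w i) := by
  have sum_smul : ∑ i, r i • (v i, w i) = ((0 : E), ∑ i, r i * w i) := by
    ext1
    · simpa [Prod.fst_sum] using hrel
    · simp [Prod.snd_sum]
  simp only [div_eq_inv_mul, mul_smul, ← Finset.smul_sum, sum_smul]
  simp [hw]

theorem stmt1_general {ι E : Type*} [Fintype ι] [DecidableEq ι] [AddCommGroup E] [Module ℚ E]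
    (v : ι → E) (w : ι → ℚ)
    (hindep : LinearIndependent ℚ fun i => (v i, w i))
    (r : ι → ℚ) (hrel : ∑ i, r i • v i = 0) (hw : 0 < ∑ i, r i * w i)
    (j : ι) (c : ι → ℚ) (hc : ∀ α, α ≠ j → 0 < c α)
    (p : E × ℚ) (hp : p = ∑ α ∈ Finset.univ.erase j, c α • (v α, w α)) :
    (0 < r j →
      (∃ ε₀ : ℚ, 0 < ε₀ ∧ ∀ ε : ℚ, 0 < ε → ε ≤ ε₀ →
        p + ((0 : E), ε) ∈ qCone (Set.range fun i => (v i, w i))) ∧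
      (∀ ε : ℚ, 0 < ε →
        p - ((0 : E), ε) ∉ qCone (Set.range fun i => (v i, w i)))) ∧
    (r j < 0 →
      (∃ ε₀ : ℚ, 0 < ε₀ ∧ ∀ ε : ℚ, 0 < ε → ε ≤ ε₀ →
        p - ((0 : E), ε) ∈ qCone (Set.range fun i => (v i, w i))) ∧
      (∀ ε : ℚ, 0 < ε →
        p + ((0 : E), ε) ∉ qCone (Set.range fun i => (v i, w i)))) := by
  have vertical_up := vertical_eq_smul_sum hrel hw.ne'
  have vertical_down (ε : ℚ) :
      -((0 : E), ε) = ε • ∑ i, (-(r i / ∑ l, r l * w l)) • (v i, w i) := by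
    simp only [vertical_up ε, neg_smul, Finset.sum_neg_distrib, smul_neg]
  simp only [hp, sub_eq_add_neg, vertical_down]
  simp only [vertical_up]
  refine ⟨fun hrj => ?_, fun hrj => ?_⟩
  · have hsj := div_pos hrj hw
    exact ⟨exists_pos_sum_erase_add_smul_sum_mem_qCone hc hsj.le,
      fun _ => sum_erase_add_smul_sum_notMem_qCone hindep (neg_neg_of_pos hsj)⟩
  · have hsj := div_neg_of_neg_of_pos hrj hw
    exact ⟨exists_pos_sum_erase_add_smul_sum_mem_qCone hc (neg_nonneg.2 hsj.le),
      fun _ => sum_erase_add_smul_sum_notMem_qCone hindep hsj⟩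

theorem stmt1 {n k : ℕ} (v : Fin k → Fin n → ℚ) (w : Fin k → ℚ)
    (hindep : LinearIndependent ℚ (fun i => ((v i, w i) : (Fin n → ℚ) × ℚ)))
    (r : Fin k → ℚ) (hr0 : ∀ i, r i ≠ 0)
    (hrel : ∑ i, r i • v i = 0) (hw : 0 < ∑ i, r i * w i)
    (j : Fin k) (c : Fin k → ℚ) (hc : ∀ α, α ≠ j → 0 < c α)
    (p : (Fin n → ℚ) × ℚ)
    (hp : p = ∑ α ∈ Finset.univ.erase j, c α • ((v α, w α) : (Fin n → ℚ) × ℚ)) :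
    (0 < r j →
      (∃ ε₀ : ℚ, 0 < ε₀ ∧ ∀ ε : ℚ, 0 < ε → ε ≤ ε₀ →
        p + ((0 : Fin n → ℚ), ε) ∈
          qCone (Set.range fun i => ((v i, w i) : (Fin n → ℚ) × ℚ))) ∧
      (∀ ε : ℚ, 0 < ε →
        p - ((0 : Fin n → ℚ), ε) ∉
          qCone (Set.range fun i => ((v i, w i) : (Fin n → ℚ) × ℚ)))) ∧
    (r j < 0 →
      (∃ ε₀ : ℚ, 0 < ε₀ ∧ ∀ ε : ℚ, 0 < ε → ε ≤ ε₀ →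
        p - ((0 : Fin n → ℚ), ε) ∈
          qCone (Set.range fun i => ((v i, w i) : (Fin n → ℚ) × ℚ))) ∧
      (∀ ε : ℚ, 0 < ε →
        p + ((0 : Fin n → ℚ), ε) ∉
          qCone (Set.range fun i => ((v i, w i) : (Fin n → ℚ) × ℚ)))) :=
  stmt1_general v w hindep r hrel hw j c hc p hp
end

section
/- Let n, k be natural numbers with k ≥ 2, let v : Fin k → ℤ^n, and let I₊ and I₋ be nonempty disjoint subsets of Fin k with I₊ ∪ I₋ = Fin k. Assume ∑_{i ∈ I₊} v i = ∑_{j ∈ I₋} v j, write v₀ for this common value, and assume that for every index i ∈ Fin k the subfamily (v α)_{α ≠ i} is unimodular. Then for every i ∈ I₊ and every j ∈ I₋, the family consisting of v₀ together with the vectors v α for α ∉ {i, j} is ℚ-linearly independent and unimodular, and the subgroup of ℤ^n it generates equals the subgroup generated by (v α)_{α ≠ i}. -/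
/-!
Let `i ∈ I₊` and `j ∈ I₋`. Since `v₀ = v j + ∑_{b ∈ I₋, b ≠ j} v b` and `i ∉ I₋`, the new family
arises from the unimodular family `(v α)_{α ≠ i}` by adding to its member `v j` an integral
combination of the other members. This elementary operation is invertible over `ℤ`, so it changes
neither the generated subgroup nor the rational span, and it preserves linear independence.
-/

section Option

variable {R K M V κ : Type*}

theorem span_range_option_elim_le_of_sub_mem [Ring R] [AddCommGroup M] [Module R M] {f : κ → M}
    {x y : M} (h : x - y ∈ Submodule.span R (Set.range f)) :
    Submodule.span R (Set.range fun o : Option κ => o.elim x f) ≤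
      Submodule.span R (Set.range fun o : Option κ => o.elim y f) := by
  have hf : Set.range f ⊆ Set.range fun o : Option κ => o.elim y f :=
    Set.range_comp_subset_range some fun o : Option κ => o.elim y f
  rw [Submodule.span_le]
  rintro _ ⟨_ | a, rfl⟩
  · change x ∈ Submodule.span R _
    rw [← sub_add_cancel x y]
    exact add_mem (Submodule.span_mono hf h) (Submodule.subset_span ⟨none, rfl⟩)
  · exact Submodule.subset_span ⟨some a, rfl⟩

theorem span_range_option_elim_eq_of_sub_mem [Ring R] [AddCommGroup M] [Module R M] {f : κ → M}
    {x y : M} (h : x - y ∈ Submodule.span R (Set.range f)) :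
    Submodule.span R (Set.range fun o : Option κ => o.elim x f) =
      Submodule.span R (Set.range fun o : Option κ => o.elim y f) :=
  (span_range_option_elim_le_of_sub_mem h).antisymm
    (span_range_option_elim_le_of_sub_mem (sub_mem_comm_iff.mp h))

theorem linearIndependent_option_elim_iff_of_sub_mem [DivisionRing K] [AddCommGroup V] [Module K V]
    {f : κ → V} {x y : V} (h : x - y ∈ Submodule.span K (Set.range f)) :
    LinearIndependent K (fun o : Option κ => o.elim x f) ↔
      LinearIndependent K (fun o : Option κ => o.elim y f) := by
  have hxy : x ∈ Submodule.span K (Set.range f) ↔ y ∈ Submodule.span K (Set.range f) := by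
    rw [← sub_add_cancel x y, Submodule.add_mem_iff_right _ h]
  rw [linearIndependent_option, linearIndependent_option]
  exact and_congr_right' (not_congr hxy)

end Option

/-- Splitting off the element `j` of the complement of `i`: `none` corresponds to `j`. It identifies
the index types of the families before and after `v j` is exchanged for `v₀`. -/
def optionSubtypeNeNeEquiv {ι : Type*} [DecidableEq ι] {i j : ι} (hji : j ≠ i) :
    Option {α : ι // α ≠ i ∧ α ≠ j} ≃ {α : ι // α ≠ i} where
  toFun o := o.elim ⟨j, hji⟩ fun α => ⟨α, α.2.1⟩
  invFun α := if hα : α.1 = j then none else some ⟨α, α.2, hα⟩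
  left_inv := by
    rintro (_ | α)
    · simp
    · simp [α.2.2]
  right_inv α := by
    by_cases hα : α.1 = j
    · simp [← hα]
    · simp [hα]

theorem optionSubtypeNeNeEquiv_comp {ι M : Type*} [DecidableEq ι] {i j : ι} (hji : j ≠ i)
    (v : ι → M) :
    (fun α : {α : ι // α ≠ i} => v α) ∘ optionSubtypeNeNeEquiv hji =
      fun o : Option {α : ι // α ≠ i ∧ α ≠ j} => o.elim (v j) fun α => v α := by
  ext (_ | α) <;> rfl

section Lattice

variable {n : ℕ} {ι κ : Type*}

theorem castQ_sub (x y : Fin n → ℤ) : castQ (x - y) = castQ x - castQ y := by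
  ext a
  simp [castQ]

theorem castQ_mem_span {v : ι → Fin n → ℤ} {z : Fin n → ℤ}
    (hz : z ∈ Submodule.span ℤ (Set.range v)) :
    castQ z ∈ Submodule.span ℚ (Set.range fun i => castQ (v i)) := by
  let castHom : (Fin n → ℤ) →ₗ[ℤ] (Fin n → ℚ) :=
    ((Int.castAddHom ℚ).compLeft (Fin n)).toIntLinearMap
  have himage : castHom '' Set.range v = Set.range fun i => castQ (v i) :=
    (Set.range_comp castHom v).symm
  have hcast := Submodule.mem_map_of_mem (f := castHom) hz
  rw [Submodule.map_span, himage] at hcast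
  exact Submodule.span_subset_span ℤ ℚ _ hcast

theorem IsUnimodular.comp_equiv {v : ι → Fin n → ℤ} (hv : IsUnimodular v) (e : κ ≃ ι) :
    IsUnimodular (v ∘ e) := by
  refine ⟨hv.1.comp e e.injective, fun z => ?_⟩
  rw [e.surjective.range_comp v, hv.2 z, ← e.surjective.range_comp fun i => castQ (v i)]
  rfl

theorem IsUnimodular.option_elim_of_sub_mem {f : κ → Fin n → ℤ} {x y : Fin n → ℤ}
    (hy : IsUnimodular fun o : Option κ => o.elim y f)
    (hxy : x - y ∈ Submodule.span ℤ (Set.range f)) :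
    IsUnimodular fun o : Option κ => o.elim x f := by
  have hxyQ : castQ x - castQ y ∈ Submodule.span ℚ (Set.range fun a => castQ (f a)) := by
    simpa only [castQ_sub] using castQ_mem_span hxy
  simp only [IsUnimodular, ← Option.elim_comp castQ] at hy ⊢
  rw [linearIndependent_option_elim_iff_of_sub_mem hxyQ, span_range_option_elim_eq_of_sub_mem hxyQ,
    span_range_option_elim_eq_of_sub_mem hxy]
  exact hy

end Lattice

theorem sum_sub_mem_span_range_ne_ne {R M ι : Type*} [Ring R] [AddCommGroup M] [Module R M]
    (v : ι → M) {s : Finset ι} {i j : ι} (hi : i ∉ s) (hj : j ∈ s) :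
    ∑ a ∈ s, v a - v j ∈
      Submodule.span R (Set.range fun α : {α : ι // α ≠ i ∧ α ≠ j} => v α) := by
  classical
  rw [← Finset.sum_erase_eq_sub hj]
  refine sum_mem fun a ha => Submodule.subset_span ⟨⟨a, ?_, Finset.ne_of_mem_erase ha⟩, rfl⟩
  exact ne_of_mem_of_not_mem (Finset.mem_of_mem_erase ha) hi

theorem stmt3_general {n : ℕ} {ι : Type*} {v : ι → Fin n → ℤ} {v₀ : Fin n → ℤ} {Im : Finset ι}
    (hv₀ : v₀ = ∑ a ∈ Im, v a) {i j : ι} (hi : i ∉ Im) (hj : j ∈ Im)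
    (huni : IsUnimodular fun α : {α : ι // α ≠ i} => v α) :
    IsUnimodular (fun o : Option {α : ι // α ≠ i ∧ α ≠ j} => o.elim v₀ fun α => v α) ∧
      Submodule.span ℤ
          (Set.range fun o : Option {α : ι // α ≠ i ∧ α ≠ j} => o.elim v₀ fun α => v α) =
        Submodule.span ℤ (Set.range fun α : {α : ι // α ≠ i} => v α) := by
  classical
  let e := optionSubtypeNeNeEquiv (ne_of_mem_of_not_mem hj hi)
  have he := optionSubtypeNeNeEquiv_comp (ne_of_mem_of_not_mem hj hi) v
  have hsub : v₀ - v j ∈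
      Submodule.span ℤ (Set.range fun α : {α : ι // α ≠ i ∧ α ≠ j} => v α) :=
    hv₀ ▸ sum_sub_mem_span_range_ne_ne v hi hj
  constructor
  · have hold := huni.comp_equiv e
    rw [he] at hold
    exact hold.option_elim_of_sub_mem hsub
  · rw [span_range_option_elim_eq_of_sub_mem hsub, ← he, e.surjective.range_comp]

theorem stmt3 {n k : ℕ} (hk : 2 ≤ k) (v : Fin k → Fin n → ℤ)
    (Ip Im : Finset (Fin k)) (hIp : Ip.Nonempty) (hIm : Im.Nonempty)
    (hdisj : Disjoint Ip Im) (hunion : Ip ∪ Im = Finset.univ)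
    (hrel : ∑ i ∈ Ip, v i = ∑ j ∈ Im, v j)
    (huni : ∀ i : Fin k, IsUnimodular (fun α : {α : Fin k // α ≠ i} => v (α : Fin k))) :
    ∀ i ∈ Ip, ∀ j ∈ Im,
      LinearIndependent ℚ (fun o : Option {α : Fin k // α ≠ i ∧ α ≠ j} =>
        castQ (o.elim (∑ a ∈ Ip, v a) (fun α => v (α : Fin k)))) ∧
      IsUnimodular (fun o : Option {α : Fin k // α ≠ i ∧ α ≠ j} =>
        o.elim (∑ a ∈ Ip, v a) (fun α => v (α : Fin k))) ∧
      Submodule.span ℤ (Set.range (fun o : Option {α : Fin k // α ≠ i ∧ α ≠ j} =>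
        o.elim (∑ a ∈ Ip, v a) (fun α => v (α : Fin k)))) =
      Submodule.span ℤ (Set.range (fun α : {α : Fin k // α ≠ i} => v (α : Fin k))) := by
  intro i hi j hj
  obtain ⟨hnew, hspan⟩ := stmt3_general hrel (Finset.disjoint_left.mp hdisj hi) hj (huni i)
  exact ⟨hnew.1, hnew, hspan⟩
end

section
/- Let n, k be natural numbers, let v : Fin k → ℚ^n and r : Fin k → ℚ satisfy ∑ i, r i • v i = 0, with r i ≠ 0 and −1 ≤ r i ≤ 1 for every i, and assume both {i : r i < 0} and {i : r i > 0} are nonempty. Then there exists c : Fin k → ℚ with c i > 0 for all i such that ∑_{i : r i < 0} v i = ∑ i, c i • v i, and there exists c' : Fin k → ℚ with c' i > 0 for all i such that ∑_{i : r i > 0} v i = ∑ i, c' i • v i. -/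
/-!
Adding the multiple `ε • ∑ i, r i • v i = 0` of the relation to a nonnegative combination
`∑ i, a i • v i` changes its coefficients to `a i + ε * r i` but not its value. If `r` is positive
wherever `a` vanishes, then for small `ε > 0` all the new coefficients are positive. The negative
center point is the case where `a` is the indicator function of `{i | r i < 0}`; the positive one
is the negative center point of the relation `-r`.
-/

section

variable {ι K V : Type*} [Field K] [LinearOrder K] [IsStrictOrderedRing K]

theorem exists_pos_forall_lt_add_mul_pos {a r : K} (ha : 0 ≤ a) (har : a = 0 → 0 < r) :
    ∃ δ > 0, ∀ ε, 0 < ε → ε < δ → 0 < a + ε * r := by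
  rcases le_or_gt r 0 with hr | hr
  · have ha_pos : 0 < a := ha.lt_of_ne' fun h => (har h).not_ge hr
    have hden : 0 < 1 - r := by linarith
    refine ⟨a / (1 - r), div_pos ha_pos hden, fun ε hε hlt => ?_⟩
    have hmul : ε * (1 - r) < a := (lt_div_iff₀ hden).mp hlt
    linarith
  · exact ⟨1, one_pos, fun ε hε _ => add_pos_of_nonneg_of_pos ha (mul_pos hε hr)⟩

theorem exists_pos_forall_add_mul_pos [Finite ι] {a r : ι → K} (ha : ∀ i, 0 ≤ a i)
    (har : ∀ i, a i = 0 → 0 < r i) : ∃ ε > 0, ∀ i, 0 < a i + ε * r i := by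
  choose δ hδ_pos hδ using fun i => exists_pos_forall_lt_add_mul_pos (ha i) (har i)
  obtain ⟨ε, hε, hlt⟩ := Pi.exists_forall_pos_add_lt hδ_pos
  exact ⟨ε, hε, fun i => hδ i ε hε (by simpa using hlt i)⟩

variable [Fintype ι] [AddCommGroup V] [Module K V] {v : ι → V} {r : ι → K}

theorem exists_pos_sum_smul_eq_of_sum_smul_eq_zero {a : ι → K} (hrel : ∑ i, r i • v i = 0)
    (ha : ∀ i, 0 ≤ a i) (har : ∀ i, a i = 0 → 0 < r i) :
    ∃ c : ι → K, (∀ i, 0 < c i) ∧ ∑ i, a i • v i = ∑ i, c i • v i := by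
  obtain ⟨ε, -, hpos⟩ := exists_pos_forall_add_mul_pos ha har
  refine ⟨fun i => a i + ε * r i, hpos, Eq.symm ?_⟩
  calc ∑ i, (a i + ε * r i) • v i
      = ∑ i, a i • v i + ε • ∑ i, r i • v i := by
        simp only [add_smul, mul_smul, Finset.sum_add_distrib, Finset.smul_sum]
    _ = ∑ i, a i • v i := by rw [hrel, smul_zero, add_zero]

theorem exists_pos_sum_filter_neg_eq_sum_smul (hrel : ∑ i, r i • v i = 0) (hr : ∀ i, r i ≠ 0) :
    ∃ c : ι → K, (∀ i, 0 < c i) ∧ ∑ i with r i < 0, v i = ∑ i, c i • v i := by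
  have hindicator : ∑ i with r i < 0, v i = ∑ i, (if r i < 0 then (1 : K) else 0) • v i := by
    simp only [Finset.sum_filter, ite_smul, one_smul, zero_smul]
  rw [hindicator]
  refine exists_pos_sum_smul_eq_of_sum_smul_eq_zero hrel (fun i => ?_) fun i hi => ?_
  · split_ifs <;> simp
  · have hnonneg : ¬ r i < 0 := fun h => by simp [h] at hi
    exact (not_lt.mp hnonneg).lt_of_ne' (hr i)

theorem stmt4_general (v : ι → V) (r : ι → K) (hrel : ∑ i, r i • v i = 0) (hr : ∀ i, r i ≠ 0) :
    (∃ c : ι → K, (∀ i, 0 < c i) ∧ ∑ i with r i < 0, v i = ∑ i, c i • v i) ∧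
    (∃ c' : ι → K, (∀ i, 0 < c' i) ∧ ∑ i with 0 < r i, v i = ∑ i, c' i • v i) := by
  have hrel_neg : ∑ i, (-r i) • v i = 0 := by
    simp only [neg_smul, Finset.sum_neg_distrib, hrel, neg_zero]
  refine ⟨exists_pos_sum_filter_neg_eq_sum_smul hrel hr, ?_⟩
  simpa only [neg_lt_zero] using
    exists_pos_sum_filter_neg_eq_sum_smul hrel_neg fun i => neg_ne_zero.mpr (hr i)

end

theorem stmt4 {n k : ℕ} (v : Fin k → Fin n → ℚ) (r : Fin k → ℚ)
    (hrel : ∑ i, r i • v i = 0) (h0 : ∀ i, r i ≠ 0)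
    (hb : ∀ i, -1 ≤ r i ∧ r i ≤ 1)
    (hneg : ∃ i, r i < 0) (hpos : ∃ i, 0 < r i) :
    (∃ c : Fin k → ℚ, (∀ i, 0 < c i) ∧
      ∑ i ∈ Finset.univ.filter (fun i => r i < 0), v i = ∑ i, c i • v i) ∧
    (∃ c' : Fin k → ℚ, (∀ i, 0 < c' i) ∧
      ∑ i ∈ Finset.univ.filter (fun i => 0 < r i), v i = ∑ i, c' i • v i) :=
  stmt4_general v r hrel h0
end

section
/- Let m ≥ 2 and let v : Fin m → ℚ^{m−1}. Suppose r : Fin m → ℚ satisfies ∑ i, r i • v i = 0. For each index i let D i = |det M_i| and let h = max over i of D i. Fix indices j ≠ k with (r j) * (r k) ≥ 0 and not both r j = 0 and r k = 0. Let a : Fin m → ℚ with 0 ≤ a i ≤ 1 for all i, and set q = ∑ i, a i • v i. Then |det M(q; j, k)| ≤ max (a j) (a k) * h. Moreover, if in addition a j < 1, a k < 1 and h > 0, then |det M(q; j, k)| < h. -/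
/-- `Mdel v i` is the `(m-1) × (m-1)` matrix whose columns are the vectors `v α` for
`α ≠ i`, taken in increasing order of index. -/
def Mdel {m : ℕ} (v : Fin m → Fin (m - 1) → ℚ) (i : Fin m) :
    Matrix (Fin (m - 1)) (Fin (m - 1)) ℚ :=
  Matrix.of fun r c =>
    v ((({i}ᶜ : Finset (Fin m)).orderIsoOfFin
      (by simp [Finset.card_compl]) c : Fin m)) r

/-- `Mjk v q j k _` is the `(m-1) × (m-1)` matrix whose first column is `q` and whose
remaining columns are the vectors `v α` for `α ∉ {j, k}`, in increasing order of index. -/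
def Mjk {m : ℕ} (v : Fin m → Fin (m - 1) → ℚ) (q : Fin (m - 1) → ℚ)
    (j k : Fin m) (hjk : j ≠ k) :
    Matrix (Fin (m - 1)) (Fin (m - 1)) ℚ :=
  Matrix.of fun r c =>
    if h0 : (c : ℕ) = 0 then q r
    else
      v ((({j, k}ᶜ : Finset (Fin m)).orderIsoOfFin
        (by
          rw [Finset.card_compl, Finset.card_insert_of_notMem (by simpa using hjk),
            Finset.card_singleton, Fintype.card_fin])
        (⟨(c : ℕ) - 1, by have := c.isLt; omega⟩ : Fin (m - 2)) : Fin m)) r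

/-!
Expanding the determinant along the column `q = ∑ a i • v i`, every term with `i ∉ {j, k}` has a
repeated column, so `det M(q; j, k) = a j * x + a k * y` with `|x| = D k` and `|y| = D j`.
Expanding `0 = ∑ r i • v i` in the same way gives `r j * x + r k * y = 0`, which forces
`x * y ≤ 0` because `r j` and `r k` do not have opposite signs. Hence the two terms of
`a j * x + a k * y` do not accumulate, and the larger of them bounds the sum.
-/

section OrderedRing

variable {R : Type*} [CommRing R] [LinearOrder R] [IsStrictOrderedRing R]

theorem mul_nonpos_of_mul_add_mul_eq_zero {s t x y : R} (hst : 0 ≤ s * t)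
    (hne : ¬ (s = 0 ∧ t = 0)) (hrel : s * x + t * y = 0) : x * y ≤ 0 := by
  by_contra! hxy
  have hx : x ≠ 0 := left_ne_zero_of_mul hxy.ne'
  have hy : y ≠ 0 := right_ne_zero_of_mul hxy.ne'
  have hprod : 0 ≤ s * t * (x * y) := mul_nonneg hst hxy.le
  have hsx : s * x = 0 := by
    have hsq : (s * x) ^ 2 = -(s * t * (x * y)) := by linear_combination s * x * hrel
    exact sq_nonpos_iff _ |>.mp (by linarith)
  have hty : t * y = 0 := by linear_combination hrel - hsx
  exact hne ⟨(mul_eq_zero_iff_right hx).mp hsx, (mul_eq_zero_iff_right hy).mp hty⟩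

theorem abs_add_le_max_abs_of_mul_nonpos {x y : R} (hxy : x * y ≤ 0) :
    |x + y| ≤ max |x| |y| := by
  rcases mul_nonpos_iff.mp hxy with ⟨hx, hy⟩ | ⟨hx, hy⟩
  · rw [abs_of_nonneg hx, abs_of_nonpos hy, abs_le]
    constructor <;> linarith [le_max_left x (-y), le_max_right x (-y)]
  · rw [abs_of_nonpos hx, abs_of_nonneg hy, abs_le]
    constructor <;> linarith [le_max_left (-x) y, le_max_right (-x) y]

theorem abs_mul_add_mul_le_max_mul {a b x y h : R} (ha : 0 ≤ a) (hb : 0 ≤ b)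
    (hxy : x * y ≤ 0) (hx : |x| ≤ h) (hy : |y| ≤ h) :
    |a * x + b * y| ≤ max a b * h := by
  have hopp : a * x * (b * y) ≤ 0 := by
    rw [mul_mul_mul_comm]
    exact mul_nonpos_of_nonneg_of_nonpos (mul_nonneg ha hb) hxy
  calc |a * x + b * y| ≤ max |a * x| |b * y| := abs_add_le_max_abs_of_mul_nonpos hopp
    _ = max (a * |x|) (b * |y|) := by rw [abs_mul, abs_mul, abs_of_nonneg ha, abs_of_nonneg hb]
    _ ≤ max (a * h) (b * h) := by gcongr
    _ = max a b * h := (max_mul_of_nonneg a b ((abs_nonneg x).trans hx)).symm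

end OrderedRing

section ColMatrix

variable {R n ι : Type*}

/-- The matrix whose columns are the members of the family `v` selected by `σ`; the minors of a
vector configuration are the determinants of these matrices. -/
def colMatrix (v : ι → n → R) (σ : n → ι) : Matrix n n R :=
  Matrix.of fun p c => v (σ c) p

theorem updateCol_colMatrix [DecidableEq n] (v : ι → n → R) (σ : n → ι) (c : n) (i : ι) :
    (colMatrix v σ).updateCol c (v i) = colMatrix v (Function.update σ c i) := by
  ext p d
  by_cases hd : d = c <;> simp [colMatrix, hd]

theorem compl_singleton_subset_range_update [DecidableEq n] {σ : n → ι} {c : n} {j k : ι}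
    (hc : σ c = j) (hσ : {k}ᶜ ⊆ Set.range σ) :
    {j}ᶜ ⊆ Set.range (Function.update σ c k) := by
  intro i hij
  by_cases hik : i = k
  · exact ⟨c, by simp [hik]⟩
  · obtain ⟨d, rfl⟩ := hσ hik
    have hdc : d ≠ c := by
      rintro rfl
      exact hij hc
    exact ⟨d, Function.update_of_ne hdc k σ⟩

variable [Fintype n] [DecidableEq n] [CommRing R]

theorem abs_det_colMatrix_eq_of_range_subset [LinearOrder R] [IsStrictOrderedRing R]
    (v : ι → n → R) {σ τ : n → ι} (hσ : Function.Injective σ)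
    (hrange : Set.range σ ⊆ Set.range τ) :
    |(colMatrix v σ).det| = |(colMatrix v τ).det| := by
  choose e he using fun c => hrange (Set.mem_range_self c)
  have he_inj : Function.Injective e := fun c d hcd => hσ (by rw [← he c, ← he d, hcd])
  let perm : Equiv.Perm n := Equiv.ofBijective e (Finite.injective_iff_bijective.mp he_inj)
  have hsub : colMatrix v σ = (colMatrix v τ).submatrix (Equiv.refl n) perm := by
    ext p c
    exact congrArg (v · p) (he c).symm
  rw [hsub, Matrix.abs_det_submatrix_equiv_equiv]

variable [Fintype ι]

theorem det_updateCol_sum_smul (A : Matrix n n R) (c : n) (b : ι → R) (v : ι → n → R) :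
    (A.updateCol c (∑ i, b i • v i)).det = ∑ i, b i * (A.updateCol c (v i)).det := by
  simp only [← Matrix.cramer_apply, map_sum, map_smul, Finset.sum_apply, Pi.smul_apply,
    smul_eq_mul]

theorem det_updateCol_colMatrix_sum_smul (v : ι → n → R) {σ : n → ι} {c : n} {j k : ι}
    (hjk : j ≠ k) (hc : σ c = j) (hσ : {k}ᶜ ⊆ Set.range σ) (b : ι → R) :
    ((colMatrix v σ).updateCol c (∑ i, b i • v i)).det =
      b j * (colMatrix v σ).det + b k * (colMatrix v (Function.update σ c k)).det := by
  have hvanish (i : ι) (hi : i ≠ j ∧ i ≠ k) :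
      b i * ((colMatrix v σ).updateCol c (v i)).det = 0 := by
    obtain ⟨d, rfl⟩ := hσ hi.2
    have hdc : d ≠ c := by
      rintro rfl
      exact hi.1 hc
    exact mul_eq_zero_of_right _ (Matrix.det_updateCol_eq_zero hdc)
  rw [det_updateCol_sum_smul, Fintype.sum_eq_add j k hjk hvanish, updateCol_colMatrix,
    updateCol_colMatrix, ← hc, Function.update_eq_self]

theorem stmt5_general [LinearOrder R] [IsStrictOrderedRing R] (v : ι → n → R)
    (r : ι → R) (hrel : ∑ i, r i • v i = 0)
    {σ : n → ι} {c : n} {j k : ι} (hjk : j ≠ k) (hc : σ c = j) (hσ : {k}ᶜ ⊆ Set.range σ)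
    (h : R) (hk : |(colMatrix v σ).det| ≤ h)
    (hj : |(colMatrix v (Function.update σ c k)).det| ≤ h)
    (hsign : 0 ≤ r j * r k) (hnz : ¬ (r j = 0 ∧ r k = 0))
    (a : ι → R) (haj : 0 ≤ a j) (hak : 0 ≤ a k) :
    |((colMatrix v σ).updateCol c (∑ i, a i • v i)).det| ≤ max (a j) (a k) * h ∧
    (a j < 1 → a k < 1 → 0 < h →
      |((colMatrix v σ).updateCol c (∑ i, a i • v i)).det| < h) := by
  have hdet_rel : r j * (colMatrix v σ).det +
      r k * (colMatrix v (Function.update σ c k)).det = 0 := by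
    rw [← det_updateCol_colMatrix_sum_smul v hjk hc hσ r, hrel]
    exact Matrix.det_eq_zero_of_column_eq_zero c (by simp)
  have hbound : |((colMatrix v σ).updateCol c (∑ i, a i • v i)).det| ≤ max (a j) (a k) * h := by
    rw [det_updateCol_colMatrix_sum_smul v hjk hc hσ a]
    exact abs_mul_add_mul_le_max_mul haj hak
      (mul_nonpos_of_mul_add_mul_eq_zero hsign hnz hdet_rel) hk hj
  exact ⟨hbound, fun haj_lt hak_lt hpos =>
    hbound.trans_lt (mul_lt_of_lt_one_left hpos (max_lt haj_lt hak_lt))⟩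

end ColMatrix

section FinEnumeration

variable {m : ℕ}

theorem card_compl_pair {j k : Fin m} (hjk : j ≠ k) : ({j, k}ᶜ : Finset (Fin m)).card = m - 2 := by
  rw [Finset.card_compl, Finset.card_pair hjk, Fintype.card_fin]

/-- The enumeration of the indices other than `k` that lists `j` first and then the remaining ones
in increasing order; it selects the columns of `Mjk v (v j) j k hjk`. -/
def frontEnum (j k : Fin m) (hjk : j ≠ k) (c : Fin (m - 1)) : Fin m :=
  if hc : (c : ℕ) = 0 then j
  else ({j, k}ᶜ : Finset (Fin m)).orderEmbOfFin (card_compl_pair hjk) ⟨c - 1, by omega⟩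

theorem compl_singleton_subset_range_frontEnum (j k : Fin m) (hjk : j ≠ k) :
    {k}ᶜ ⊆ Set.range (frontEnum j k hjk) := by
  intro i hik
  by_cases hij : i = j
  · exact ⟨⟨0, by omega⟩, by simp [frontEnum, hij]⟩
  · have hi : i ∈ Set.range (({j, k}ᶜ : Finset (Fin m)).orderEmbOfFin (card_compl_pair hjk)) := by
      rw [Finset.range_orderEmbOfFin]
      simpa [hij] using hik
    obtain ⟨d, rfl⟩ := hi
    exact ⟨⟨d + 1, by omega⟩, by simp [frontEnum]⟩

theorem Mjk_eq_updateCol [NeZero (m - 1)] (v : Fin m → Fin (m - 1) → ℚ) (q : Fin (m - 1) → ℚ)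
    (j k : Fin m) (hjk : j ≠ k) :
    Mjk v q j k hjk = (colMatrix v (frontEnum j k hjk)).updateCol 0 q := by
  ext p c
  by_cases hc : c = 0
  · simp [Mjk, hc]
  · simp [Mjk, colMatrix, frontEnum, hc]

theorem abs_det_colMatrix_eq_abs_det_Mdel (v : Fin m → Fin (m - 1) → ℚ) {i : Fin m}
    {σ : Fin (m - 1) → Fin m} (hσ : {i}ᶜ ⊆ Set.range σ) :
    |(colMatrix v σ).det| = |(Mdel v i).det| := by
  have hcard : ({i}ᶜ : Finset (Fin m)).card = m - 1 := by simp [Finset.card_compl]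
  have hrange : Set.range (({i}ᶜ : Finset (Fin m)).orderEmbOfFin hcard) ⊆ Set.range σ := by
    rwa [Finset.range_orderEmbOfFin, Finset.coe_compl, Finset.coe_singleton]
  exact (abs_det_colMatrix_eq_of_range_subset v (RelEmbedding.injective _) hrange).symm

end FinEnumeration

theorem stmt5 {m : ℕ} (hm : 2 ≤ m) (v : Fin m → Fin (m - 1) → ℚ)
    (r : Fin m → ℚ) (hrel : ∑ i, r i • v i = 0)
    (h : ℚ)
    (hh : h = Finset.univ.sup' ⟨⟨0, by omega⟩, Finset.mem_univ _⟩
      (fun i => |(Mdel v i).det|))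
    (j k : Fin m) (hjk : j ≠ k) (hsign : 0 ≤ r j * r k) (hnz : ¬ (r j = 0 ∧ r k = 0))
    (a : Fin m → ℚ) (ha : ∀ i, 0 ≤ a i ∧ a i ≤ 1)
    (q : Fin (m - 1) → ℚ) (hq : q = ∑ i, a i • v i) :
    |(Mjk v q j k hjk).det| ≤ max (a j) (a k) * h ∧
    (a j < 1 → a k < 1 → 0 < h → |(Mjk v q j k hjk).det| < h) := by
  have : NeZero (m - 1) := ⟨by omega⟩
  have hminor_le {i : Fin m} {σ : Fin (m - 1) → Fin m} (hσ : {i}ᶜ ⊆ Set.range σ) :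
      |(colMatrix v σ).det| ≤ h := by
    rw [abs_det_colMatrix_eq_abs_det_Mdel v hσ, hh]
    exact Finset.le_sup' (fun i => |(Mdel v i).det|) (Finset.mem_univ i)
  have hfront : frontEnum j k hjk 0 = j := by simp [frontEnum]
  have hrange := compl_singleton_subset_range_frontEnum j k hjk
  rw [Mjk_eq_updateCol, hq]
  exact stmt5_general v r hrel hjk hfront hrange h (hminor_le hrange)
    (hminor_le (compl_singleton_subset_range_update hfront hrange)) hsign hnz a (ha j).1 (ha k).1
end

section
/- Let k ≥ 2 and let v : Fin k → ℚ^{k−1} be such that for every index i the subfamily (v α)_{α ≠ i} is ℚ-linearly independent, and let r : Fin k → ℚ be nonzero with ∑ i, r i • v i = 0 and r i ≠ 0 for all i. Set w₋ = ∑_{α : r α < 0} v α, and for each index i let D i = |det M_i|. Then for all indices i ≠ j: (a) if r i > 0 and r j > 0, then |det M(w₋; i, j)| = 0; (b) if r i > 0 and r j < 0, then |det M(w₋; i, j)| = D i; (c) if r i < 0 and r j > 0, then |det M(w₋; i, j)| = D j; (d) if r i < 0 and r j < 0, then |det M(w₋; i, j)| = |D j − D i|. -/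
/-!
The determinant of `Mjk v q i j` is a linear functional of `q` that vanishes at every `v α` with
`α ∉ {i, j}`, where `q` repeats a column. On a combination `∑ c α • v α` only the terms `i` and `j`
therefore survive, and up to sign their values `det (Mjk v (v i) i j)` and `det (Mjk v (v j) i j)`
are the minors `det (Mdel v j)` and `det (Mdel v i)`. Evaluating at `w₋` gives the first three
identities. In the last one the relation `∑ r α • v α = 0` forces the two values to have opposite
signs when `r i` and `r j` are both negative, so their sum has absolute value `|D j - D i|`.
-/

lemma abs_add_eq_abs_abs_sub_abs_of_mul_nonpos {R : Type*} [Ring R] [LinearOrder R]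
    [IsStrictOrderedRing R] {a b : R} (h : a * b ≤ 0) : |a + b| = |(|a| - |b|)| := by
  rcases mul_nonpos_iff.mp h with ⟨ha, hb⟩ | ⟨ha, hb⟩
  · rw [abs_of_nonneg ha, abs_of_nonpos hb, sub_neg_eq_add]
  · rw [abs_of_nonpos ha, abs_of_nonneg hb, ← neg_add', abs_neg]

lemma mul_nonpos_of_mul_add_mul_eq_zero_s6 {R : Type*} [CommRing R] [LinearOrder R]
    [IsStrictOrderedRing R] {a b s t : R} (hs : s < 0) (ht : t ≤ 0) (h : s * a + t * b = 0) :
    a * b ≤ 0 := by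
  have hmul : s * (a * b) = -t * b ^ 2 := by linear_combination b * h
  have hnonneg : 0 ≤ s * (a * b) := hmul ▸ mul_nonneg (neg_nonneg.mpr ht) (sq_nonneg b)
  exact nonpos_of_mul_nonneg_right hnonneg hs

section AlternatingMap

variable {R M N ι : Type*} [CommSemiring R] [AddCommMonoid M] [Module R M]

lemma abs_alternatingMap_comp_eq_of_range_eq
    [AddCommGroup N] [LinearOrder N] [IsOrderedAddMonoid N] [Module R N]
    {κ : Type*} [Finite κ] (f : M [⋀^κ]→ₗ[R] N) (v : ι → M) {a b : κ → ι}
    (ha : a.Injective) (hb : b.Injective) (hab : Set.range a = Set.range b) :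
    |f (v ∘ a)| = |f (v ∘ b)| := by
  classical
  have := Fintype.ofFinite κ
  let σ : Equiv.Perm κ :=
    (Equiv.ofInjective a ha).trans ((Equiv.setCongr hab).trans (Equiv.ofInjective b hb).symm)
  have hσ : a = b ∘ σ := by
    funext c
    simp [σ, Equiv.apply_ofInjective_symm]
  rw [hσ, ← Function.comp_assoc, f.map_perm]
  rcases Int.units_eq_one_or (Equiv.Perm.sign σ) with h | h <;> simp [h]

variable [AddCommMonoid N] [Module R N]

lemma alternatingMap_curryLeft_eq_zero_of_mem_range {n : ℕ} (f : M [⋀^Fin (n + 1)]→ₗ[R] N)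
    {u : Fin n → M} {x : M} (hx : x ∈ Set.range u) : f.curryLeft x u = 0 := by
  obtain ⟨c, rfl⟩ := hx
  exact f.map_eq_zero_of_eq _ (i := 0) (j := c.succ) (by simp) (Fin.succ_ne_zero c).symm

lemma alternatingMap_curryLeft_sum_smul [Fintype ι] {n : ℕ} (f : M [⋀^Fin (n + 1)]→ₗ[R] N)
    (v : ι → M) {e : Fin n → ι} {i j : ι} (hij : i ≠ j) (he : {i, j}ᶜ ⊆ Set.range e)
    (c : ι → R) :
    f.curryLeft (∑ a, c a • v a) (v ∘ e) =
      c i • f.curryLeft (v i) (v ∘ e) + c j • f.curryLeft (v j) (v ∘ e) := by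
  let φ : M →ₗ[R] N :=
    { toFun := fun x => f.curryLeft x (v ∘ e)
      map_add' := fun x y => by rw [map_add, AlternatingMap.add_apply]
      map_smul' := fun t x => by rw [map_smul, AlternatingMap.smul_apply, RingHom.id_apply] }
  change φ (∑ a, c a • v a) = c i • φ (v i) + c j • φ (v j)
  simp only [map_sum, map_smul]
  refine Fintype.sum_eq_add i j hij fun a ha => ?_
  have hva : v a ∈ Set.range (v ∘ e) := by
    obtain ⟨b, rfl⟩ := he (by simpa using ha)
    exact ⟨b, rfl⟩
  have hφ : φ (v a) = 0 := alternatingMap_curryLeft_eq_zero_of_mem_range f hva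
  rw [hφ, smul_zero]

end AlternatingMap

section Minors

variable {n : ℕ} (v : Fin (n + 2) → Fin (n + 1) → ℚ) (q : Fin (n + 1) → ℚ) {i j : Fin (n + 2)}

lemma card_compl_pair_s6 (hij : i ≠ j) : ({i, j}ᶜ : Finset (Fin (n + 2))).card = n := by
  rw [Finset.card_compl, Finset.card_pair hij, Fintype.card_fin, Nat.add_sub_cancel]

lemma det_Mdel (i : Fin (n + 2)) :
    (Mdel v i).det = Matrix.detRowAlternating (v ∘ i.succAbove) := by
  rw [← Matrix.det_transpose]
  congr 1
  ext c r
  simp [Mdel]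

lemma det_Mjk (hij : i ≠ j) :
    (Mjk v q i j hij).det = Matrix.detRowAlternating.curryLeft q
      (v ∘ ({i, j}ᶜ : Finset (Fin (n + 2))).orderEmbOfFin (card_compl_pair_s6 hij)) := by
  rw [← Matrix.det_transpose]
  change Matrix.det _ = Matrix.det (Matrix.vecCons q _)
  congr 1
  ext c r
  cases c using Fin.cases <;> simp [Mjk]

lemma det_Mjk_comm (hij : i ≠ j) : (Mjk v q i j hij).det = (Mjk v q j i hij.symm).det := by
  simp only [det_Mjk, Finset.pair_comm i j]

lemma det_Mjk_sum_smul (hij : i ≠ j) (c : Fin (n + 2) → ℚ) :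
    (Mjk v (∑ a, c a • v a) i j hij).det =
      c i * (Mjk v (v i) i j hij).det + c j * (Mjk v (v j) i j hij).det := by
  simp only [det_Mjk]
  refine alternatingMap_curryLeft_sum_smul _ v hij ?_ c
  rw [Finset.range_orderEmbOfFin, Finset.coe_compl, Finset.coe_pair]

lemma abs_det_Mjk_left (hij : i ≠ j) : |(Mjk v (v i) i j hij).det| = |(Mdel v j).det| := by
  rw [det_Mjk, det_Mdel, AlternatingMap.curryLeft_apply_apply, Matrix.vecCons, ← Fin.comp_cons]
  refine abs_alternatingMap_comp_eq_of_range_eq _ v ?_ Fin.succAbove_right_injective ?_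
  · exact Fin.cons_injective_iff.mpr ⟨by simp, RelEmbedding.injective _⟩
  · ext a
    simp +contextual [Fin.range_cons, hij]

lemma abs_det_Mjk_right (hij : i ≠ j) : |(Mjk v (v j) i j hij).det| = |(Mdel v i).det| := by
  rw [det_Mjk_comm, abs_det_Mjk_left]

end Minors

theorem stmt6_general {k : ℕ} (v : Fin k → Fin (k - 1) → ℚ) (r : Fin k → ℚ)
    (hrel : ∑ i, r i • v i = 0) (wneg : Fin (k - 1) → ℚ)
    (hw : wneg = ∑ α ∈ Finset.univ.filter (fun α => r α < 0), v α)
    (i j : Fin k) (hij : i ≠ j) :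
    (0 ≤ r i → 0 ≤ r j → |(Mjk v wneg i j hij).det| = 0) ∧
    (0 ≤ r i → r j < 0 → |(Mjk v wneg i j hij).det| = |(Mdel v i).det|) ∧
    (r i < 0 → 0 ≤ r j → |(Mjk v wneg i j hij).det| = |(Mdel v j).det|) ∧
    (r i < 0 → r j < 0 →
      |(Mjk v wneg i j hij).det| = abs (|(Mdel v j).det| - |(Mdel v i).det|)) := by
  obtain ⟨n, rfl⟩ : ∃ n, k = n + 2 := ⟨k - 2, by omega⟩
  have hwneg : wneg = ∑ α, (if r α < 0 then (1 : ℚ) else 0) • v α := by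
    simp [hw, Finset.sum_filter]
  have hdet := det_Mjk_sum_smul v hij fun α => if r α < 0 then 1 else 0
  have hzero : r i * (Mjk v (v i) i j hij).det + r j * (Mjk v (v j) i j hij).det = 0 := by
    rw [← det_Mjk_sum_smul v hij r, hrel]
    simpa using det_Mjk_sum_smul v hij 0
  rw [hwneg, hdet, ← abs_det_Mjk_left v hij, ← abs_det_Mjk_right v hij]
  refine ⟨fun hi hj => ?_, fun hi hj => ?_, fun hi hj => ?_, fun hi hj => ?_⟩
  · simp [hi.not_gt, hj.not_gt]
  · simp [hi.not_gt, hj]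
  · simp [hi, hj.not_gt]
  · simpa [hi, hj] using abs_add_eq_abs_abs_sub_abs_of_mul_nonpos
      (mul_nonpos_of_mul_add_mul_eq_zero_s6 hi hj.le hzero)

theorem stmt6 {k : ℕ} (hk : 2 ≤ k) (v : Fin k → Fin (k - 1) → ℚ)
    (hindep : ∀ i : Fin k,
      LinearIndependent ℚ (fun α : {α : Fin k // α ≠ i} => v α))
    (r : Fin k → ℚ) (hr : r ≠ 0) (hrel : ∑ i, r i • v i = 0) (h0 : ∀ i, r i ≠ 0)
    (wneg : Fin (k - 1) → ℚ)
    (hw : wneg = ∑ α ∈ Finset.univ.filter (fun α => r α < 0), v α)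
    (i j : Fin k) (hij : i ≠ j) :
    (0 < r i → 0 < r j → |(Mjk v wneg i j hij).det| = 0) ∧
    (0 < r i → r j < 0 → |(Mjk v wneg i j hij).det| = |(Mdel v i).det|) ∧
    (r i < 0 → 0 < r j → |(Mjk v wneg i j hij).det| = |(Mdel v j).det|) ∧
    (r i < 0 → r j < 0 →
      |(Mjk v wneg i j hij).det| = abs (|(Mdel v j).det| - |(Mdel v i).det|)) := by
  obtain ⟨hpp, hpn, hnp, hnn⟩ := stmt6_general v r hrel wneg hw i j hij
  exact ⟨fun hi hj => hpp hi.le hj.le, fun hi => hpn hi.le, fun hi hj => hnp hi hj.le, hnn⟩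
end

section
/- Let n be a natural number and let L be a saturated subgroup of ℤ^n (i.e., ℤ^n/L is torsion-free). Let x : Fin s → ℤ^n be a ℚ-linearly independent family with x p ∈ L for every p and such that every element of L is a ℚ-linear combination of the x p. Let y : Fin t → ℤ^n be such that the combined family (x, y) is ℚ-linearly independent, and let ȳ denote the images of the y q in ℤ^n/L. Then: the subgroup generated by the x p and y q has finite index in the group of all points of ℤ^n lying in the ℚ-linear span of the x p and y q; the subgroup generated by the x p has finite index in L; the subgroup generated by the ȳ q has finite index in the group of all elements of ℤ^n/L lying in the ℚ-linear span (in (ℤ^n/L) ⊗ ℚ) of the ȳ q; and the first index equals the product of the second and third indices. -/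
open TensorProduct

/-- The coercion `ℤ^n → ℚ^n` as an additive group homomorphism. -/
def castQHom (n : ℕ) : (Fin n → ℤ) →+ (Fin n → ℚ) where
  toFun := castQ
  map_zero' := by ext j; simp [castQ]
  map_add' x y := by ext j; simp [castQ]

/-!
Write `H` for the subgroup generated by all `x p` and `y q`. The lattice points of a `ℚ`-span are
those having a nonzero multiple in the corresponding `ℤ`-span; they form its isolator. Since `L`
lies in the isolator of `H`, the isolator of `H` is the preimage of the isolator of the image of
`H` in `ℤ^n / L`. The index of `H` in its isolator therefore splits along
`H ≤ H + L ≤ isolator H`: the lower index is `[L : H ∩ L]`, where linear independence identifies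
`H ∩ L` with the span of the `x p`, and the upper one is computed in `ℤ^n / L`.
-/

section Isolator

open nonZeroDivisors

variable {R A : Type*} [CommRing R] [AddCommGroup A] [Module R A]

/-- The isolator (also called saturation) of a submodule `N`: the elements having a multiple in `N`
by a non-zero-divisor, encoded as the preimage of the torsion of `A ⧸ N`. It describes, without
reference to a vector space, the points of `A` in the span of `N` over the fraction field. -/
def isolator (N : Submodule R A) : Submodule R A :=
  (Submodule.torsion R (A ⧸ N)).comap N.mkQ

theorem mem_isolator {N : Submodule R A} {a : A} :
    a ∈ isolator N ↔ ∃ c ∈ R⁰, c • a ∈ N := by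
  simp only [isolator, Submodule.mem_comap, Submodule.mem_torsion_iff, Submodule.mkQ_apply,
    Subtype.exists, Submonoid.mk_smul, ← Submodule.Quotient.mk_smul,
    Submodule.Quotient.mk_eq_zero, exists_prop]

theorem le_isolator (N : Submodule R A) : N ≤ isolator N :=
  fun _ ha => mem_isolator.2 ⟨1, one_mem _, by rwa [one_smul]⟩

theorem isolator_mono {N P : Submodule R A} (h : N ≤ P) : isolator N ≤ isolator P :=
  fun _ ha =>
    let ⟨c, hc, hca⟩ := mem_isolator.1 ha
    mem_isolator.2 ⟨c, hc, h hca⟩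

theorem isolator_isolator (N : Submodule R A) : isolator (isolator N) = isolator N := by
  refine le_antisymm (fun a ha => ?_) (le_isolator _)
  obtain ⟨c, hc, hca⟩ := mem_isolator.1 ha
  obtain ⟨d, hd, hdca⟩ := mem_isolator.1 hca
  exact mem_isolator.2 ⟨d * c, mul_mem hd hc, by rwa [mul_smul]⟩

theorem comap_isolator {B : Type*} [AddCommGroup B] [Module R B] (f : A →ₗ[R] B)
    (N : Submodule R B) : (isolator N).comap f = isolator (N.comap f) := by
  ext a
  simp only [Submodule.mem_comap, mem_isolator, map_smul]

theorem comap_isolator_map {B : Type*} [AddCommGroup B] [Module R B] {f : A →ₗ[R] B}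
    {H : Submodule R A} (hf : LinearMap.ker f ≤ isolator H) :
    (isolator (H.map f)).comap f = isolator H := by
  rw [comap_isolator, Submodule.comap_map_eq]
  refine le_antisymm ?_ (isolator_mono le_sup_left)
  calc isolator (H ⊔ LinearMap.ker f) ≤ isolator (isolator H) :=
        isolator_mono (sup_le (le_isolator H) hf)
    _ = isolator H := isolator_isolator H

theorem torsion_le_isolator (N : Submodule R A) : Submodule.torsion R A ≤ isolator N :=
  fun a ha =>
    let ⟨c, hca⟩ := (Submodule.mem_torsion_iff a).1 ha
    mem_isolator.2 ⟨c, c.2, (hca : (c : R) • a = 0) ▸ N.zero_mem⟩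

theorem disjoint_isolator {N P : Submodule R A} [Module.IsTorsionFree R P] (h : Disjoint N P) :
    Disjoint (isolator N) P := by
  refine Submodule.disjoint_def.2 fun a haN haP => ?_
  obtain ⟨c, hc, hca⟩ := mem_isolator.1 haN
  have hca_zero : c • (⟨a, haP⟩ : P) = 0 :=
    Subtype.ext (Submodule.disjoint_def.1 h _ hca (P.smul_mem c haP))
  have hreg : IsSMulRegular P c :=
    Module.IsTorsionFree.isSMulRegular (isRegular_iff_mem_nonZeroDivisors.2 hc)
  exact congrArg Subtype.val (hreg.right_eq_zero_of_smul hca_zero)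

theorem sup_inf_eq_of_le_isolator {L N P : Submodule R A} [Module.IsTorsionFree R P]
    (hNP : Disjoint N P) (hNL : N ≤ L) (hL : L ≤ isolator N) : (N ⊔ P) ⊓ L = N := by
  have hPL : P ⊓ L = ⊥ := ((disjoint_isolator hNP).mono_left hL).symm.eq_bot
  rw [sup_inf_assoc_of_le P hNL, hPL, sup_bot_eq]

variable (K : Type*) [CommRing K] [Algebra R K] [IsFractionRing R K]

theorem restrictScalars_span_eq_isolator [Module K A] [IsScalarTower R K A] (s : Set A) :
    (Submodule.span K s).restrictScalars R = isolator (Submodule.span R s) := by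
  ext v
  rw [Submodule.restrictScalars_mem, mem_isolator]
  constructor
  · intro hv
    obtain ⟨u, hu, c, rfl⟩ := (IsLocalization.mem_span_iff R⁰).1 hv
    refine ⟨c, c.2, ?_⟩
    rwa [← algebraMap_smul K (c : R), smul_smul, IsLocalization.mk'_spec', map_one, one_smul]
  · rintro ⟨c, hc, hcv⟩
    refine (IsLocalization.mem_span_iff R⁰).2 ⟨c • v, hcv, ⟨c, hc⟩, ?_⟩
    rw [← algebraMap_smul K c, smul_smul, IsLocalization.mk'_spec _ _ ⟨c, hc⟩, map_one, one_smul]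

theorem comap_span_image_eq_isolator {V : Type*} [AddCommGroup V] [Module R V] [Module K V]
    [IsScalarTower R K V] {f : A →ₗ[R] V} (hf : LinearMap.ker f ≤ Submodule.torsion R A)
    (s : Set A) :
    ((Submodule.span K (f '' s)).restrictScalars R).comap f = isolator (Submodule.span R s) := by
  rw [restrictScalars_span_eq_isolator, ← Submodule.map_span,
    comap_isolator_map (hf.trans (torsion_le_isolator _))]

theorem ker_tensorProduct_mk_one_le_torsion :
    LinearMap.ker (TensorProduct.mk R K A 1) ≤ Submodule.torsion R A := fun a ha =>
  (Submodule.mem_torsion_iff a).2 ((IsLocalizedModule.eq_zero_iff R⁰ _).1 ha)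

end Isolator

section Index

theorem relIndex_comap_eq_mul {A B : Type*} [AddCommGroup A] [AddGroup B] {f : A →+ B}
    (hf : Function.Surjective f) {H : AddSubgroup A} {G : AddSubgroup B} (hHG : H.map f ≤ G) :
    H.relIndex (G.comap f) = H.relIndex f.ker * (H.map f).relIndex G := by
  have hle : H ⊔ f.ker ≤ G.comap f := by
    rw [← AddSubgroup.comap_map_eq]
    exact AddSubgroup.comap_mono hHG
  calc H.relIndex (G.comap f)
      = H.relIndex (H ⊔ f.ker) * (H ⊔ f.ker).relIndex (G.comap f) :=
        (AddSubgroup.relIndex_mul_relIndex _ _ _ le_sup_left hle).symm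
    _ = H.relIndex f.ker * (H.map f).relIndex G := by
        rw [AddSubgroup.relIndex_sup_left, ← AddSubgroup.comap_map_eq, AddSubgroup.relIndex_comap,
          AddSubgroup.map_comap_eq_self_of_surjective hf]

variable {A : Type*} [AddCommGroup A]

theorem toAddSubgroup_eq_ker_mkQ {R : Type*} [Ring R] [Module R A] (N : Submodule R A) :
    N.toAddSubgroup = N.mkQ.toAddMonoidHom.ker :=
  congrArg Submodule.toAddSubgroup N.ker_mkQ.symm

theorem relIndex_ne_zero_of_le_isolator [Module.Finite ℤ A] {N G : Submodule ℤ A}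
    (hG : G ≤ isolator N) : N.toAddSubgroup.relIndex G.toAddSubgroup ≠ 0 := by
  have : Finite (Submodule.torsion ℤ (A ⧸ N)) :=
    Module.finite_of_fg_torsion _ Submodule.torsion_isTorsion
  have : Finite (G.map N.mkQ) :=
    Finite.Set.subset (Submodule.torsion ℤ (A ⧸ N) : Set (A ⧸ N))
      (Submodule.map_le_iff_le_comap.2 hG)
  rw [toAddSubgroup_eq_ker_mkQ, AddSubgroup.relIndex_ker]
  exact (Nat.card_pos (α := G.map N.mkQ)).ne'

theorem relIndex_isolator_eq_mul {L H : Submodule ℤ A} (hL : L ≤ isolator H) :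
    H.toAddSubgroup.relIndex (isolator H).toAddSubgroup =
      (H ⊓ L).toAddSubgroup.relIndex L.toAddSubgroup *
        (H.map L.mkQ).toAddSubgroup.relIndex (isolator (H.map L.mkQ)).toAddSubgroup := by
  have hcomap : (isolator H).toAddSubgroup =
      (isolator (H.map L.mkQ)).toAddSubgroup.comap L.mkQ.toAddMonoidHom :=
    congrArg Submodule.toAddSubgroup (comap_isolator_map (L.ker_mkQ.trans_le hL)).symm
  rw [hcomap, relIndex_comap_eq_mul L.mkQ_surjective (le_isolator (H.map L.mkQ)),
    ← toAddSubgroup_eq_ker_mkQ, ← AddSubgroup.inf_relIndex_right]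
  rfl

end Index

section SpanSumElim

variable {R A ι κ : Type*} [CommRing R] [AddCommGroup A] [Module R A] {L : Submodule R A}
  {x : ι → A} {y : κ → A}

theorem span_range_mkQ_eq_map (hxL : ∀ p, x p ∈ L) :
    Submodule.span R (Set.range fun q => L.mkQ (y q)) =
      (Submodule.span R (Set.range (Sum.elim x y))).map L.mkQ := by
  have hx : (Submodule.span R (Set.range x)).map L.mkQ = ⊥ := by
    rw [← LinearMap.le_ker_iff_map, L.ker_mkQ, Submodule.span_le]
    exact Set.range_subset_iff.2 hxL
  rw [Set.Sum.elim_range, Submodule.span_union, Submodule.map_sup, hx, bot_sup_eq,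
    Submodule.map_span, ← Set.range_comp]
  rfl

theorem span_range_sumElim_inf (hxy : LinearIndependent R (Sum.elim x y))
    (hxL : ∀ p, x p ∈ L) (hL : L ≤ isolator (Submodule.span R (Set.range x))) :
    Submodule.span R (Set.range (Sum.elim x y)) ⊓ L = Submodule.span R (Set.range x) := by
  obtain ⟨-, hy, hdisj⟩ := linearIndependent_sum.1 hxy
  have : Module.Free R (Submodule.span R (Set.range y)) := .of_basis (.span hy)
  rw [Set.Sum.elim_range, Submodule.span_union]
  exact sup_inf_eq_of_le_isolator hdisj (Submodule.span_le.2 (Set.range_subset_iff.2 hxL)) hL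

end SpanSumElim

theorem stmt7_general {A V ι κ : Type*} [AddCommGroup A] [Module.Finite ℤ A] [AddCommGroup V]
    [Module ℚ V] {f : A →ₗ[ℤ] V} (hf : LinearMap.ker f ≤ Submodule.torsion ℤ A)
    {L : Submodule ℤ A} {x : ι → A} (hxL : ∀ p, x p ∈ L)
    (hxgen : ∀ z ∈ L, f z ∈ Submodule.span ℚ (Set.range fun p => f (x p))) {y : κ → A}
    (hxy : LinearIndependent ℚ (Sum.elim (fun p => f (x p)) (fun q => f (y q)))) :
    let j := TensorProduct.mk ℤ ℚ (A ⧸ L) 1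
    let H₁ := (Submodule.span ℤ (Set.range (Sum.elim x y))).toAddSubgroup
    let G₁ := (Submodule.span ℚ (Set.range
      (Sum.elim (fun p => f (x p)) (fun q => f (y q))))).toAddSubgroup.comap f.toAddMonoidHom
    let H₂ := (Submodule.span ℤ (Set.range x)).toAddSubgroup
    let H₃ := (Submodule.span ℤ (Set.range fun q => L.mkQ (y q))).toAddSubgroup
    let G₃ := (Submodule.span ℚ (Set.range fun q => j (L.mkQ (y q)))).toAddSubgroup.comap
      j.toAddMonoidHom
    H₁.relIndex G₁ ≠ 0 ∧ H₂.relIndex L.toAddSubgroup ≠ 0 ∧ H₃.relIndex G₃ ≠ 0 ∧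
      H₁.relIndex G₁ = H₂.relIndex L.toAddSubgroup * H₃.relIndex G₃ := by
  intro j H₁ G₁ H₂ H₃ G₃
  have hcomp : Sum.elim (fun p => f (x p)) (fun q => f (y q)) = f ∘ Sum.elim x y :=
    (Sum.comp_elim f x y).symm
  have hG₁ : G₁ = (isolator (Submodule.span ℤ (Set.range (Sum.elim x y)))).toAddSubgroup := by
    rw [← comap_span_image_eq_isolator ℚ hf, ← Set.range_comp, ← hcomp]
    rfl
  have hG₃ : G₃ = (isolator (Submodule.span ℤ (Set.range fun q => L.mkQ (y q)))).toAddSubgroup := by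
    rw [← comap_span_image_eq_isolator ℚ (ker_tensorProduct_mk_one_le_torsion ℚ), ← Set.range_comp]
    rfl
  have hL : L ≤ isolator (Submodule.span ℤ (Set.range x)) := by
    rw [← comap_span_image_eq_isolator ℚ hf, ← Set.range_comp]
    exact hxgen
  have hLH₁ : L ≤ isolator (Submodule.span ℤ (Set.range (Sum.elim x y))) :=
    hL.trans (isolator_mono (Submodule.span_mono
      (Set.Sum.elim_range x y ▸ Set.subset_union_left)))
  have hxyℤ : LinearIndependent ℤ (Sum.elim x y) :=
    .of_comp f (hcomp ▸ (LinearIndependent.iff_fractionRing ℤ ℚ).2 hxy)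
  have hmul : H₁.relIndex G₁ = H₂.relIndex L.toAddSubgroup * H₃.relIndex G₃ := by
    rw [hG₁, hG₃, relIndex_isolator_eq_mul hLH₁, span_range_sumElim_inf hxyℤ hxL hL,
      ← span_range_mkQ_eq_map hxL]
  refine ⟨?_, relIndex_ne_zero_of_le_isolator hL, ?_, hmul⟩
  · exact hG₁ ▸ relIndex_ne_zero_of_le_isolator le_rfl
  · exact hG₃ ▸ relIndex_ne_zero_of_le_isolator le_rfl

theorem castQHom_injective (n : ℕ) : Function.Injective (castQHom n) :=
  fun _ _ h => funext fun j => Int.cast_injective (congrFun h j)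

theorem stmt7 {n s t : ℕ} (L : Submodule ℤ (Fin n → ℤ))
    (hsat : ∀ (c : ℤ) (z : Fin n → ℤ), c ≠ 0 → c • z ∈ L → z ∈ L)
    (x : Fin s → Fin n → ℤ)
    (hxindep : LinearIndependent ℚ fun p => castQ (x p))
    (hxL : ∀ p, x p ∈ L)
    (hxgen : ∀ z ∈ L, castQ z ∈ Submodule.span ℚ (Set.range fun p => castQ (x p)))
    (y : Fin t → Fin n → ℤ)
    (hxy : LinearIndependent ℚ
      (Sum.elim (fun p => castQ (x p)) (fun q => castQ (y q)))) :
    -- the quotient lattice `ℤ^n / L` and the images of the `y q` in it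
    let M := (Fin n → ℤ) ⧸ L
    let ybar : Fin t → M := fun q => Submodule.Quotient.mk (y q)
    -- the natural map from `M` to `M ⊗ ℚ`
    let ι : M →ₗ[ℤ] ℚ ⊗[ℤ] M := (TensorProduct.mk ℤ ℚ M) 1
    -- the subgroup generated by the `x p` and `y q` ...
    let H1 : AddSubgroup (Fin n → ℤ) :=
      (Submodule.span ℤ (Set.range (Sum.elim x y))).toAddSubgroup
    -- ... in the group of all lattice points of the `ℚ`-span of the `x p` and `y q`
    let G1 : AddSubgroup (Fin n → ℤ) :=
      ((Submodule.span ℚ (Set.range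
        (Sum.elim (fun p => castQ (x p)) (fun q => castQ (y q))))).toAddSubgroup).comap
        (castQHom n)
    -- the subgroup generated by the `x p` ...
    let H2 : AddSubgroup (Fin n → ℤ) := (Submodule.span ℤ (Set.range x)).toAddSubgroup
    -- ... inside `L`
    let G2 : AddSubgroup (Fin n → ℤ) := L.toAddSubgroup
    -- the subgroup generated by the `ȳ q` ...
    let H3 : AddSubgroup M := (Submodule.span ℤ (Set.range ybar)).toAddSubgroup
    -- ... in the group of elements of `M` lying in the `ℚ`-span of the `ȳ q` in `M ⊗ ℚ`
    let G3 : AddSubgroup M :=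
      ((Submodule.span ℚ (Set.range fun q => ι (ybar q))).toAddSubgroup).comap
        ι.toAddMonoidHom
    H1.relIndex G1 ≠ 0 ∧ H2.relIndex G2 ≠ 0 ∧ H3.relIndex G3 ≠ 0 ∧
      H1.relIndex G1 = H2.relIndex G2 * H3.relIndex G3 := by
  have hker : LinearMap.ker (castQHom n).toIntLinearMap ≤ Submodule.torsion ℤ (Fin n → ℤ) :=
    (LinearMap.ker_eq_bot.2 (castQHom_injective n)).trans_le bot_le
  exact stmt7_general hker hxL hxgen hxy
end

section
/- In ℚ^3 with standard basis vectors e₁, e₂, e₃, set u₁ = e₂, u₂ = e₂ + e₃, u₃ = e₁ + e₂ + e₃, u₄ = e₁ + e₂ + 2e₃, and set w₁ = 0, w₂ = 0, w₃ = 1, w₄ = 2. Then: (a) the four vectors (u i, w i) ∈ ℚ^3 × ℚ are ℚ-linearly independent; (b) u₁ − u₂ − u₃ + u₄ = 0 and w₁ − w₂ − w₃ + w₄ > 0; (c) every nonzero r : Fin 4 → ℚ with ∑ i, r i • u i = 0 and ∑ i, (r i) * (w i) > 0 is a positive rational multiple of (1, −1, −1, 1); in particular every such r has exactly two positive coefficients,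 namely r₁ > 0 and r₄ > 0, while r₂ < 0 and r₃ < 0. -/
/-- The standard basis vectors of `ℚ³`. -/
def ee : Fin 3 → Fin 3 → ℚ := fun i => Pi.single i 1

/-- `u₁ = e₂`, `u₂ = e₂ + e₃`, `u₃ = e₁ + e₂ + e₃`, `u₄ = e₁ + e₂ + 2e₃`. -/
def uu : Fin 4 → Fin 3 → ℚ :=
  ![ee 1, ee 1 + ee 2, ee 0 + ee 1 + ee 2, ee 0 + ee 1 + (2 : ℚ) • ee 2]

/-- `w₁ = 0`, `w₂ = 0`, `w₃ = 1`, `w₄ = 2`. -/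
def ww : Fin 4 → ℚ := ![0, 0, 1, 2]

/-!
Call `∑ i, r i * ww i` the height of `r`. The relations among the `uu i` form the line spanned by
`(1, -1, -1, 1)`, whose height is `1`. As the height is linear and nonzero on this line, no
nonzero relation lifts to the `(uu i, ww i)`, and the relations of positive height are the positive
multiples of `(1, -1, -1, 1)`.
-/

open Submodule

section Relations

variable {ι K V : Type*} [Fintype ι]

theorem linearIndependent_prodMk_of_ker_le_span_singleton [Ring K] [NoZeroDivisors K]
    [AddCommGroup V] [Module K V] {u : ι → V} {w ρ : ι → K}
    (hker : LinearMap.ker (Fintype.linearCombination K u) ≤ K ∙ ρ) (hρ : ρ ⬝ᵥ w ≠ 0) :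
    LinearIndependent K fun i => (u i, w i) := by
  rw [Fintype.linearIndependent_iff]
  intro r hr
  have relation : Fintype.linearCombination K u r = 0 := by
    simpa [Fintype.linearCombination_apply, Prod.fst_sum] using congrArg Prod.fst hr
  have height : r ⬝ᵥ w = 0 := by
    simpa [dotProduct, Prod.snd_sum] using congrArg Prod.snd hr
  obtain ⟨c, rfl⟩ := mem_span_singleton.mp (hker relation)
  rw [smul_dotProduct, smul_eq_mul] at height
  have hc : c = 0 := (mul_eq_zero.mp height).resolve_right hρ
  simp [hc]

theorem exists_pos_smul_eq_of_dotProduct_pos [Semiring K] [LinearOrder K]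
    [IsStrictOrderedRing K] {r w ρ : ι → K} (hr : r ∈ K ∙ ρ) (hρ : 0 < ρ ⬝ᵥ w) (hrw : 0 < r ⬝ᵥ w) :
    ∃ c : K, 0 < c ∧ r = c • ρ := by
  obtain ⟨c, rfl⟩ := mem_span_singleton.mp hr
  rw [smul_dotProduct, smul_eq_mul] at hrw
  exact ⟨c, (mul_pos_iff_of_pos_right hρ).mp hrw, rfl⟩

end Relations

/-- The coefficients of the circuit relation `u₁ - u₂ - u₃ + u₄ = 0`, in the normalization that
has positive height. -/
def circuitRelation : Fin 4 → ℚ := ![1, -1, -1, 1]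

theorem linearCombination_uu (r : Fin 4 → ℚ) :
    Fintype.linearCombination ℚ uu r =
      ![r 2 + r 3, r 0 + r 1 + r 2 + r 3, r 1 + r 2 + 2 * r 3] := by
  ext j
  fin_cases j <;>
    simp [Fintype.linearCombination_apply, Fin.sum_univ_four, uu, ee, mul_comm]

theorem ker_linearCombination_uu :
    LinearMap.ker (Fintype.linearCombination ℚ uu) = ℚ ∙ circuitRelation := by
  ext r
  rw [LinearMap.mem_ker, linearCombination_uu, mem_span_singleton]
  constructor
  · intro h
    obtain ⟨h₁, h₂, h₃⟩ :
        r 2 + r 3 = 0 ∧ r 0 + r 1 + r 2 + r 3 = 0 ∧ r 1 + r 2 + 2 * r 3 = 0 := by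
      simpa using h
    refine ⟨r 3, ?_⟩
    ext i
    fin_cases i <;> simp [circuitRelation] <;> linarith
  · rintro ⟨c, rfl⟩
    ext j
    fin_cases j <;> simp [circuitRelation, two_mul, add_assoc]

theorem circuitRelation_dotProduct_ww : circuitRelation ⬝ᵥ ww = 1 := by
  rw [dotProduct, Fin.sum_univ_four]
  change (1 * 0 + -1 * 0 + -1 * 1 + 1 * 2 : ℚ) = 1
  norm_num

theorem stmt10 :
    -- (a) the four lifted vectors are linearly independent
    LinearIndependent ℚ (fun i => ((uu i, ww i) : (Fin 3 → ℚ) × ℚ)) ∧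
    -- (b) the relation `u₁ - u₂ - u₃ + u₄ = 0` with positive weighted height
    (uu 0 - uu 1 - uu 2 + uu 3 = 0 ∧ 0 < ww 0 - ww 1 - ww 2 + ww 3) ∧
    -- (c) every normalized nonzero relation is a positive multiple of `(1, -1, -1, 1)`
    (∀ r : Fin 4 → ℚ, r ≠ 0 → ∑ i, r i • uu i = 0 → 0 < ∑ i, r i * ww i →
      (∃ c : ℚ, 0 < c ∧ r = c • ![1, -1, -1, 1]) ∧
      0 < r 0 ∧ 0 < r 3 ∧ r 1 < 0 ∧ r 2 < 0) := by
  have height_pos : 0 < circuitRelation ⬝ᵥ ww := circuitRelation_dotProduct_ww ▸ one_pos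
  refine ⟨linearIndependent_prodMk_of_ker_le_span_singleton ker_linearCombination_uu.le
    height_pos.ne', ⟨?_, ?_⟩, ?_⟩
  · have relation : circuitRelation ∈ LinearMap.ker (Fintype.linearCombination ℚ uu) :=
      ker_linearCombination_uu ▸ mem_span_singleton_self _
    simpa [Fintype.linearCombination_apply, Fin.sum_univ_four, circuitRelation, sub_eq_add_neg]
      using relation
  · simpa [dotProduct, Fin.sum_univ_four, circuitRelation, sub_eq_add_neg] using height_pos
  · intro r _ relation height
    have mem_span : r ∈ ℚ ∙ circuitRelation := ker_linearCombination_uu.le relation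
    obtain ⟨c, hc, rfl⟩ := exists_pos_smul_eq_of_dotProduct_pos mem_span height_pos height
    exact ⟨⟨c, hc, rfl⟩, by simpa [circuitRelation] using hc⟩
end

section
/- Let n, k be natural numbers with k ≥ 2, and let v : Fin k → ℤ^n with the subfamily (v α)_{α ≥ 2} ℚ-linearly independent and v 1 = ∑_{α = 2}^{k} v α. Then: (a) cone({v α : 2 ≤ α ≤ k}) = ⋃_{j = 2}^{k} cone({v 1} ∪ {v α : 2 ≤ α ≤ k, α ≠ j}); (b) if moreover the family (v α)_{α ≥ 2} is unimodular, then for every j with 2 ≤ j ≤ k the family {v 1} ∪ {v α : 2 ≤ α ≤ k, α ≠ j} is unimodular and generates the same subgroup of ℤ^n as (v α)_{α ≥ 2}. -/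
/-!
For (a), if `x = ∑ a_α v_α` with all `a_α ≥ 0` and `a_j` is the smallest coefficient, then
`x = a_j v₁ + ∑ (a_α - a_j) v_α`, where the `j`-th term vanishes and all coefficients are
nonnegative. For (b), `v_j` is `v₁` minus the other `v_α`, so exchanging `v_j` for `v₁` does not
change the `ℤ`-span; and unimodularity of a finite family depends only on its `ℤ`-span and its
cardinality.
-/

section SpanInsertSum

variable {R M ι : Type*} [DecidableEq ι] {s : Finset ι}

theorem span_insert_sum_image_erase_le [Semiring R] [AddCommMonoid M] [Module R M] (w : ι → M)
    (j : ι) :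
    Submodule.span R (insert (∑ i ∈ s, w i) (w '' (s.erase j))) ≤
      Submodule.span R (w '' s) := by
  refine Submodule.span_le.2 (Set.insert_subset ?_ ?_)
  · exact sum_mem fun i hi ↦ Submodule.subset_span (Set.mem_image_of_mem w hi)
  · exact (Set.image_mono (Finset.erase_subset j s)).trans Submodule.subset_span

theorem span_insert_sum_image_erase [Ring R] [AddCommGroup M] [Module R M] (w : ι → M) {j : ι}
    (hj : j ∈ s) :
    Submodule.span R (insert (∑ i ∈ s, w i) (w '' (s.erase j))) =
      Submodule.span R (w '' s) := by
  refine (span_insert_sum_image_erase_le w j).antisymm (Submodule.span_le.2 ?_)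
  rintro _ ⟨i, hi, rfl⟩
  rcases eq_or_ne i j with rfl | hij
  · rw [eq_sub_of_add_eq (Finset.add_sum_erase s w hj)]
    refine sub_mem (Submodule.subset_span (Set.mem_insert _ _)) (sum_mem fun k hk ↦ ?_)
    exact Submodule.subset_span (Set.mem_insert_of_mem _ (Set.mem_image_of_mem w hk))
  · exact Submodule.subset_span
      (Set.mem_insert_of_mem _ (Set.mem_image_of_mem w (Finset.mem_erase.2 ⟨hij, hi⟩)))

theorem sum_smul_mem_hull_insert_sum_image_erase [Ring R] [PartialOrder R] [IsOrderedRing R]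
    [AddCommMonoid M] [Module R M] (w : ι → M) {a : ι → R} {j : ι}
    (haj : 0 ≤ a j) (hmin : ∀ i ∈ s, a j ≤ a i) :
    ∑ i ∈ s, a i • w i ∈
      PointedCone.hull R (insert (∑ i ∈ s, w i) (w '' (s.erase j))) := by
  have subtract_min : ∑ i ∈ s, a i • w i =
      a j • ∑ i ∈ s, w i + ∑ i ∈ s.erase j, (a i - a j) • w i := by
    rw [Finset.sum_erase s (by rw [sub_self, zero_smul]), Finset.smul_sum,
      ← Finset.sum_add_distrib]
    simp only [← add_smul, add_sub_cancel]
  rw [subtract_min]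
  refine add_mem ?_ (sum_mem fun i hi ↦ ?_)
  · exact PointedCone.smul_mem _ haj (PointedCone.subset_hull (Set.mem_insert _ _))
  · exact PointedCone.smul_mem _ (sub_nonneg.2 (hmin i (Finset.mem_of_mem_erase hi)))
      (PointedCone.subset_hull (Set.mem_insert_of_mem _ (Set.mem_image_of_mem w hi)))

theorem hull_image_eq_biUnion_hull_insert_sum [Ring R] [LinearOrder R] [IsOrderedRing R]
    [AddCommMonoid M] [Module R M] (w : ι → M) (hs : s.Nonempty) :
    (PointedCone.hull R (w '' s) : Set M) =
      ⋃ j ∈ s, PointedCone.hull R (insert (∑ i ∈ s, w i) (w '' (s.erase j))) := by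
  refine subset_antisymm (fun x hx ↦ ?_)
    (Set.iUnion₂_subset fun j _ ↦ span_insert_sum_image_erase_le w j)
  obtain ⟨a, rfl⟩ := Submodule.mem_span_image_finset_iff_exists_fun' _ |>.1 hx
  obtain ⟨j, hj, hmin⟩ := s.exists_min_image a hs
  exact Set.mem_biUnion hj (sum_smul_mem_hull_insert_sum_image_erase w (a j).2 hmin)

end SpanInsertSum

theorem qCone_eq_coe_hull {V : Type*} [AddCommMonoid V] [Module ℚ V] (S : Set V) :
    qCone S = PointedCone.hull ℚ S := by
  ext x
  constructor
  · rintro ⟨t, c, htS, hc, rfl⟩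
    exact sum_mem fun y hy ↦
      PointedCone.smul_mem _ (hc y hy) (PointedCone.subset_hull (htS hy))
  · intro hx
    obtain ⟨c, hcS, hc, rfl⟩ := PointedCone.mem_hull_set.1 hx
    exact ⟨c.support, c, hcS, fun y _ ↦ hc y, rfl⟩

/-- `castQ` as a `ℤ`-linear map, so that it commutes with sums and `ℤ`-spans. -/
def castQLinearMap (n : ℕ) : (Fin n → ℤ) →ₗ[ℤ] (Fin n → ℚ) :=
  ((Int.castAddHom ℚ).compLeft (Fin n)).toIntLinearMap

theorem castQ_sum {n : ℕ} {ι : Type*} (s : Finset ι) (v : ι → Fin n → ℤ) :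
    castQ (∑ i ∈ s, v i) = ∑ i ∈ s, castQ (v i) :=
  map_sum (castQLinearMap n) v s

theorem span_rat_castQ_image_span_int {n : ℕ} (S : Set (Fin n → ℤ)) :
    Submodule.span ℚ (castQ '' Submodule.span ℤ S) = Submodule.span ℚ (castQ '' S) := by
  change Submodule.span ℚ ((Submodule.span ℤ S).map (castQLinearMap n) : Set (Fin n → ℚ)) = _
  rw [Submodule.map_span, Submodule.span_span_of_tower]
  rfl

theorem IsUnimodular.of_span_eq {n : ℕ} {ι κ : Type*} [Fintype ι] [Fintype κ]
    {v : ι → Fin n → ℤ} {w : κ → Fin n → ℤ} (hv : IsUnimodular v)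
    (hcard : Fintype.card κ = Fintype.card ι)
    (hspan : Submodule.span ℤ (Set.range w) = Submodule.span ℤ (Set.range v)) :
    IsUnimodular w := by
  have hspanQ : Submodule.span ℚ (Set.range fun i ↦ castQ (w i)) =
      Submodule.span ℚ (Set.range fun i ↦ castQ (v i)) := by
    rw [Set.range_comp' castQ w, Set.range_comp' castQ v, ← span_rat_castQ_image_span_int, hspan,
      span_rat_castQ_image_span_int]
  refine ⟨?_, fun z ↦ ?_⟩
  · rw [linearIndependent_iff_card_eq_finrank_span, Set.finrank, hspanQ, hcard]
    exact linearIndependent_iff_card_eq_finrank_span.1 hv.1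
  · rw [hspan, hspanQ]
    exact hv.2 z

section NeSubtype

variable {ι : Type*} [Fintype ι] [DecidableEq ι]

theorem setOf_ne_eq_coe_erase (i₀ : ι) : {i | i ≠ i₀} = (Finset.univ.erase i₀ : Set ι) := by
  ext; simp

theorem setOf_ne_and_ne_eq_coe_erase_erase (i₀ j : ι) :
    {i | i ≠ i₀ ∧ i ≠ j} = ((Finset.univ.erase i₀).erase j : Set ι) := by
  ext; simp

theorem card_option_subtype_and_ne (p : ι → Prop) [DecidablePred p] {j : ι} (hj : p j) :
    Fintype.card (Option {i // p i ∧ i ≠ j}) = Fintype.card {i // p i} := by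
  have filter_and_ne : Finset.univ.filter (fun i ↦ p i ∧ i ≠ j) =
      (Finset.univ.filter p).erase j := by
    ext; simp [and_comm]
  rw [Fintype.card_option, Fintype.card_subtype, Fintype.card_subtype, filter_and_ne]
  exact Finset.card_erase_add_one (by simpa using hj)

theorem span_range_option_elim_eq_span_range {R M : Type*} [Ring R] [AddCommGroup M] [Module R M]
    (w : ι → M) {i₀ j : ι} (hsum : w i₀ = ∑ i ∈ Finset.univ.erase i₀, w i) (hj : j ≠ i₀) :
    Submodule.span R (Set.range fun o : Option {i // i ≠ i₀ ∧ i ≠ j} ↦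
        o.elim (w i₀) fun i ↦ w i) =
      Submodule.span R (Set.range fun i : {i // i ≠ i₀} ↦ w i) := by
  have hj_mem : j ∈ Finset.univ.erase i₀ := by simpa using hj
  rw [Option.range_elim, Set.range_comp' w, Set.range_comp' w, Subtype.range_coe_subtype,
    Subtype.range_coe_subtype, setOf_ne_eq_coe_erase, setOf_ne_and_ne_eq_coe_erase_erase, hsum]
  exact span_insert_sum_image_erase w hj_mem

end NeSubtype

theorem stmt11_general {n : ℕ} {ι : Type*} [Fintype ι] [DecidableEq ι] [Nontrivial ι]
    (v : ι → Fin n → ℤ) {i₀ : ι} (hsum : v i₀ = ∑ α ∈ Finset.univ.erase i₀, v α) :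
    qCone ((fun α ↦ castQ (v α)) '' {α | α ≠ i₀}) =
      ⋃ j ∈ {α : ι | α ≠ i₀},
        qCone (insert (castQ (v i₀)) ((fun α ↦ castQ (v α)) '' {α | α ≠ i₀ ∧ α ≠ j})) ∧
    (IsUnimodular (fun α : {α : ι // α ≠ i₀} ↦ v α) →
      ∀ j : ι, j ≠ i₀ →
        IsUnimodular (fun o : Option {α : ι // α ≠ i₀ ∧ α ≠ j} ↦
          o.elim (v i₀) (fun α ↦ v α)) ∧
        Submodule.span ℤ (Set.range (fun o : Option {α : ι // α ≠ i₀ ∧ α ≠ j} ↦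
          o.elim (v i₀) (fun α ↦ v α))) =
        Submodule.span ℤ (Set.range (fun α : {α : ι // α ≠ i₀} ↦ v α))) := by
  refine ⟨?_, fun hv j hj ↦ ?_⟩
  · have hne : (Finset.univ.erase i₀).Nonempty := (exists_ne i₀).imp (by simp)
    simp only [qCone_eq_coe_hull, hsum, castQ_sum, setOf_ne_eq_coe_erase,
      setOf_ne_and_ne_eq_coe_erase_erase]
    exact hull_image_eq_biUnion_hull_insert_sum (fun α ↦ castQ (v α)) hne
  · have hspan := span_range_option_elim_eq_span_range (R := ℤ) v hsum hj
    exact ⟨hv.of_span_eq (card_option_subtype_and_ne _ hj) hspan, hspan⟩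

/-- `k ≥ 2` is realized as `k = m + 2`; the distinguished index `1` of the paper is `0`
here, so the subfamily indexed by `2 ≤ α ≤ k` becomes the subfamily with `α ≠ 0`. -/
theorem stmt11 {n m : ℕ} (v : Fin (m + 2) → Fin n → ℤ)
    (hindep : LinearIndependent ℚ
      (fun α : {α : Fin (m + 2) // α ≠ 0} => castQ (v α)))
    (hsum : v 0 = ∑ α ∈ Finset.univ.erase 0, v α) :
    -- (a)
    qCone ((fun α => castQ (v α)) '' {α | α ≠ 0}) =
      ⋃ j ∈ {α : Fin (m + 2) | α ≠ 0},
        qCone (insert (castQ (v 0)) ((fun α => castQ (v α)) '' {α | α ≠ 0 ∧ α ≠ j})) ∧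
    -- (b)
    (IsUnimodular (fun α : {α : Fin (m + 2) // α ≠ 0} => v (α : Fin (m + 2))) →
      ∀ j : Fin (m + 2), j ≠ 0 →
        IsUnimodular (fun o : Option {α : Fin (m + 2) // α ≠ 0 ∧ α ≠ j} =>
          o.elim (v 0) (fun α => v (α : Fin (m + 2)))) ∧
        Submodule.span ℤ (Set.range (fun o : Option {α : Fin (m + 2) // α ≠ 0 ∧ α ≠ j} =>
          o.elim (v 0) (fun α => v (α : Fin (m + 2))))) =
        Submodule.span ℤ (Set.range
          (fun α : {α : Fin (m + 2) // α ≠ 0} => v (α : Fin (m + 2))))) :=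
  stmt11_general v hsum
end

section
/- Let n, k be natural numbers, let ρ i = (v i, w i) ∈ ℚ^n × ℚ, i ∈ Fin k, be a ℚ-linearly independent family, and let S be a nonempty proper subset of Fin k with ∑_{i ∈ S} v i = ∑_{j ∉ S} v j and ∑_{i ∈ S} w i > ∑_{j ∉ S} w j. Set ρ₀ = (∑_{i ∈ S} v i, ∑_{i ∈ S} w i) ∈ ℚ^n × ℚ. Then: (a) the family consisting of ρ₀ together with the ρ j for j ∉ S is ℚ-linearly independent; (b) its projections satisfy the relation (∑_{i ∈ S} v i) − ∑_{j ∉ S} v j = 0 whose weighted height (∑_{i ∈ S} w i) − ∑_{j ∉ S} w j is positive, and every r₀, (r j)_{j ∉ S} in ℚ with r₀ • (∑_{i ∈ S} v i) + ∑_{j ∉ S} r j • v j = 0 is a scalar multiple of the relation with coefficients (1, −1, …, −1); in particular, normalized so that the weighted sum of heights is positive, the relation has exactly one positive coefficient. -/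
/-!
If `∑ r i • u i = 0` and `∑ s i • u i = 0`, then in `V × R` the combinations `∑ r i • (u i, x i)`
and `∑ s i • (u i, x i)` are the vertical vectors of heights `∑ r i * x i` and `∑ s i * x i`.
Scaling each by the height of the other makes them equal, so independence of the `(u i, x i)`
forces `r` and `s` to be proportional. Comparing an arbitrary relation with the one that is `1` on
`S` and `-1` off `S` gives uniqueness. Independence of `ρ₀` and the `ρ j` holds because they are
the sums of the independent `ρ i` over disjoint nonempty blocks of indices.
-/

section Semiring

variable {R M ι κ : Type*} [Semiring R] [AddCommMonoid M] [Module R M]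

theorem linearIndependent_sum_of_pairwise_disjoint {ρ : ι → M} (hρ : LinearIndependent R ρ)
    {T : κ → Finset ι} (hT : ∀ a, (T a).Nonempty) (hdisj : Pairwise (Function.onFun Disjoint T)) :
    LinearIndependent R fun a => ∑ i ∈ T a, ρ i := by
  have index_injective : Function.Injective fun p : Σ a, T a => (p.2 : ι) := by
    rintro ⟨a, i, hi⟩ ⟨b, j, hj⟩ (rfl : i = j)
    obtain rfl : a = b := hdisj.eq (Finset.not_disjoint_iff.2 ⟨i, hi, hj⟩)
    rfl
  have sum_smul_sum (s : Finset κ) (c : κ → R) :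
      ∑ a ∈ s, c a • ∑ i ∈ T a, ρ i =
        ∑ p ∈ s.sigma fun a => (Finset.univ : Finset (T a)), c p.1 • ρ p.2 := by
    simp only [Finset.sum_sigma, ← Finset.smul_sum, Finset.sum_coe_sort]
  refine linearIndependent_iff'ₛ.2 fun s c d hcd a ha => ?_
  rw [sum_smul_sum, sum_smul_sum] at hcd
  obtain ⟨i, hi⟩ := hT a
  exact linearIndependent_iff'ₛ.1 (hρ.comp _ index_injective) _ (fun p => c p.1) (fun p => d p.1)
    hcd ⟨a, i, hi⟩ (by simp [ha])

theorem linearIndependent_option_elim_sum {ρ : ι → M} (hρ : LinearIndependent R ρ)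
    {S : Finset ι} (hS : S.Nonempty) :
    LinearIndependent R fun o : Option {j // j ∉ S} => o.elim (∑ i ∈ S, ρ i) fun j => ρ j := by
  let block (o : Option {j // j ∉ S}) : Finset ι := o.elim S fun j => {(j : ι)}
  have block_nonempty : ∀ o, (block o).Nonempty := by
    rintro (_ | j)
    exacts [hS, Finset.singleton_nonempty _]
  have block_disjoint : Pairwise (Function.onFun Disjoint block) := by
    rintro (_ | ⟨i, hi⟩) (_ | ⟨j, hj⟩) hne <;> simp_all [block, Function.onFun, eq_comm]
  convert linearIndependent_sum_of_pairwise_disjoint hρ block_nonempty block_disjoint using 2 with o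
  cases o <;> simp [block]

theorem sum_piecewise_const_smul [Fintype ι] [DecidableEq ι] (S : Finset ι) (c : R)
    (r : ι → R) (u : ι → M) :
    ∑ i, S.piecewise (fun _ => c) r i • u i = c • ∑ i ∈ S, u i + ∑ j ∈ Sᶜ, r j • u j := by
  rw [← Finset.sum_add_sum_compl S, Finset.smul_sum]
  congr 1 <;> refine Finset.sum_congr rfl fun i hi => ?_
  · rw [Finset.piecewise_eq_of_mem _ _ _ hi]
  · rw [Finset.piecewise_eq_of_notMem _ _ _ (Finset.mem_compl.1 hi)]

end Semiring

theorem height_mul_eq_height_mul_of_relation {R V ι : Type*} [CommSemiring R] [AddCommMonoid V]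
    [Module R V] [Fintype ι] {u : ι → V} {x : ι → R}
    (hux : LinearIndependent R fun i => (u i, x i)) {r s : ι → R}
    (hr : ∑ i, r i • u i = 0) (hs : ∑ i, s i • u i = 0) (i : ι) :
    (∑ j, s j * x j) * r i = (∑ j, r j * x j) * s i := by
  have lift_relation {t : ι → R} (ht : ∑ j, t j • u j = 0) (c : R) :
      ∑ j, (c * t j) • (u j, x j) = (0, c * ∑ j, t j * x j) := by
    simp only [mul_smul, ← Finset.smul_sum]
    ext <;> simp [Prod.fst_sum, Prod.snd_sum, ht]
  refine Fintype.linearIndependent_iffₛ.1 hux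
    (fun j => (∑ k, s k * x k) * r j) (fun j => (∑ k, r k * x k) * s j) ?_ i
  rw [lift_relation hr, lift_relation hs, mul_comm]

section CommRing

variable {R V ι : Type*} [CommRing R] [AddCommGroup V] [Module R V] [Fintype ι] [DecidableEq ι]
  {v : ι → V} {w : ι → R} {S : Finset ι} {r₀ : R} {r : ι → R}

theorem eq_neg_of_smul_sum_add_sum_compl_eq_zero [NoZeroDivisors R]
    (hindep : LinearIndependent R fun i => (v i, w i)) (hS : S.Nonempty)
    (hrelv : ∑ i ∈ S, v i = ∑ j ∈ Sᶜ, v j) (hrelw : ∑ i ∈ S, w i ≠ ∑ j ∈ Sᶜ, w j)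
    (hr : r₀ • ∑ i ∈ S, v i + ∑ j ∈ Sᶜ, r j • v j = 0) {j : ι} (hj : j ∉ S) :
    r j = -r₀ := by
  obtain ⟨i, hi⟩ := hS
  let balanced : ι → R := S.piecewise (fun _ => 1) fun _ => -1
  have balanced_relation : ∑ i, balanced i • v i = 0 := by
    simp [balanced, sum_piecewise_const_smul, hrelv]
  have balanced_height : ∑ i, balanced i * w i = ∑ i ∈ S, w i - ∑ j ∈ Sᶜ, w j := by
    simpa [sub_eq_add_neg] using sum_piecewise_const_smul S (1 : R) (fun _ => -1) w
  have proportional := height_mul_eq_height_mul_of_relation hindep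
    ((sum_piecewise_const_smul S r₀ r v).trans hr) balanced_relation
  rw [balanced_height] at proportional
  have at_mem := proportional i
  have at_notMem := proportional j
  simp only [balanced, Finset.piecewise_eq_of_mem _ _ _ hi] at at_mem
  simp only [balanced, Finset.piecewise_eq_of_notMem _ _ _ hj] at at_notMem
  refine mul_left_cancel₀ (sub_ne_zero.2 hrelw) ?_
  linear_combination at_notMem + at_mem

theorem height_eq_mul_sub_of_eq_neg (hr : ∀ j ∉ S, r j = -r₀) :
    r₀ * ∑ i ∈ S, w i + ∑ j ∈ Sᶜ, r j * w j = r₀ * (∑ i ∈ S, w i - ∑ j ∈ Sᶜ, w j) := by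
  have sum_compl : ∑ j ∈ Sᶜ, r j * w j = -r₀ * ∑ j ∈ Sᶜ, w j := by
    rw [Finset.mul_sum]
    exact Finset.sum_congr rfl fun j hj => by rw [hr j (Finset.mem_compl.1 hj)]
  rw [sum_compl]
  ring

end CommRing

theorem stmt13_general {R V ι : Type*} [CommRing R] [LinearOrder R] [IsStrictOrderedRing R]
    [AddCommGroup V] [Module R V] [Fintype ι] [DecidableEq ι] (v : ι → V) (w : ι → R)
    (hindep : LinearIndependent R fun i => (v i, w i)) (S : Finset ι) (hS : S.Nonempty)
    (hrelv : ∑ i ∈ S, v i = ∑ j ∈ Sᶜ, v j) (hrelw : ∑ j ∈ Sᶜ, w j < ∑ i ∈ S, w i) :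
    LinearIndependent R (fun o : Option {j // j ∉ S} =>
      o.elim (∑ i ∈ S, v i, ∑ i ∈ S, w i) fun j => (v j, w j)) ∧
    (∑ i ∈ S, v i - ∑ j ∈ Sᶜ, v j = 0 ∧ 0 < ∑ i ∈ S, w i - ∑ j ∈ Sᶜ, w j) ∧
    ∀ (r₀ : R) (r : ι → R), r₀ • ∑ i ∈ S, v i + ∑ j ∈ Sᶜ, r j • v j = 0 →
      (∃ c : R, r₀ = c ∧ ∀ j ∉ S, r j = -c) ∧
      (0 < r₀ * ∑ i ∈ S, w i + ∑ j ∈ Sᶜ, r j * w j → 0 < r₀ ∧ ∀ j ∉ S, r j < 0) := by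
  have height_pos : 0 < ∑ i ∈ S, w i - ∑ j ∈ Sᶜ, w j := sub_pos.2 hrelw
  refine ⟨?_, ⟨sub_eq_zero.2 hrelv, height_pos⟩, fun r₀ r hr => ?_⟩
  · simpa only [prod_mk_sum] using linearIndependent_option_elim_sum hindep hS
  · have eq_neg : ∀ j ∉ S, r j = -r₀ := fun j hj =>
      eq_neg_of_smul_sum_add_sum_compl_eq_zero hindep hS hrelv hrelw.ne' hr hj
    refine ⟨⟨r₀, rfl, eq_neg⟩, fun hpos => ?_⟩
    rw [height_eq_mul_sub_of_eq_neg eq_neg] at hpos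
    have r₀_pos : 0 < r₀ := pos_of_mul_pos_left hpos height_pos.le
    exact ⟨r₀_pos, fun j hj => by simpa [eq_neg j hj] using r₀_pos⟩

theorem stmt13 {n k : ℕ} (v : Fin k → Fin n → ℚ) (w : Fin k → ℚ)
    (hindep : LinearIndependent ℚ fun i => ((v i, w i) : (Fin n → ℚ) × ℚ))
    (S : Finset (Fin k)) (hS : S.Nonempty) (hSproper : S ≠ Finset.univ)
    (hrelv : ∑ i ∈ S, v i = ∑ j ∈ Sᶜ, v j)
    (hrelw : ∑ j ∈ Sᶜ, w j < ∑ i ∈ S, w i) :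
    -- (a) `ρ₀` together with the `ρ j`, `j ∉ S`, is linearly independent
    LinearIndependent ℚ (fun o : Option {j : Fin k // j ∉ S} =>
      o.elim ((∑ i ∈ S, v i, ∑ i ∈ S, w i) : (Fin n → ℚ) × ℚ)
        (fun j => ((v (j : Fin k), w (j : Fin k)) : (Fin n → ℚ) × ℚ))) ∧
    -- (b) the projections satisfy the relation with positive weighted height ...
    ((∑ i ∈ S, v i) - ∑ j ∈ Sᶜ, v j = 0 ∧ 0 < (∑ i ∈ S, w i) - ∑ j ∈ Sᶜ, w j) ∧
    -- ... every relation is a scalar multiple of `(1, -1, …, -1)`, so the normalized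
    -- relation has exactly one positive coefficient
    (∀ (r₀ : ℚ) (r : Fin k → ℚ),
      r₀ • (∑ i ∈ S, v i) + ∑ j ∈ Sᶜ, r j • v j = 0 →
      (∃ c : ℚ, r₀ = c ∧ ∀ j ∉ S, r j = -c) ∧
      (0 < r₀ * (∑ i ∈ S, w i) + ∑ j ∈ Sᶜ, r j * w j →
        0 < r₀ ∧ ∀ j ∉ S, r j < 0)) := by
  exact stmt13_general v w hindep S hS hrelv hrelw
end
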